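/- Let T be a triangulation of S with vertex set V = ⋃ᵢ σᵢ(V₀), and let l, l' ∈ ℝ^{E(T)}_Δ. Suppose there exists a homeomorphism f : S → S with f(V) = V whose restriction to S ∖ V is isotopic to the identity of S ∖ V (i.e. there is a continuous map F : [0,1] × (S ∖ V) → S ∖ V with F(0,·) = f|_{S∖V}, F(1,·) = id_{S∖V}, and F(t,·) a homeomorphism of S ∖ V for each t ∈ [0,1]), such that d_T[l'](x,y) = d_T[l](f(x), f(y)) for all x, y ∈ S. Then l = l'. In other words, the map l ↦ [d_T[l]] from ℝ^{E(T)}_Δ to the Teichmüller space of polyhedral metrics on (S,V) is injective. -/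

import Mathlib

noncomputable section

open Set
open scoped ENNReal

/-- The Euclidean plane `ℝ²` with the Euclidean metric. -/
abbrev E2 : Type := EuclideanSpace ℝ (Fin 2)

/-- Vertices of the fixed closed regular (equilateral) triangle of side length 1. -/
def p0 : E2 := !₂[0, 0]
def p1 : E2 := !₂[1, 0]
def p2 : E2 := !₂[1 / 2, Real.sqrt 3 / 2]

/-- `Dtri` is the fixed closed regular triangle in `ℝ²` with edge length 1. -/
def Dtri : Set E2 := convexHull ℝ {p0, p1, p2}

/-- `V0` is the set of the three vertices of `Dtri`. -/
def V0 : Set E2 := {p0, p1, p2}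

/-- The three closed edges of `Dtri`. -/
def e01 : Set E2 := segment ℝ p0 p1
def e12 : Set E2 := segment ℝ p1 p2
def e02 : Set E2 := segment ℝ p0 p2

/-- `E0` is the set of the three closed edges of `Dtri`. -/
def E0 : Set (Set E2) := {e01, e12, e02}

/-- The open edge `e° = e ∖ V₀`. -/
def eo (e : Set E2) : Set E2 := e \ V0

/-- `Do = D°` is the interior of `Dtri` in `ℝ²`. -/
def Do : Set E2 := interior Dtri

/-- `l : E₀ → ℝ` is positive and satisfies the strict triangle inequalities:
`l e₁ + l e₂ > l e₃` whenever `{e₁, e₂, e₃} = E₀`. -/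
def TriIneq (l : Set E2 → ℝ) : Prop :=
  (∀ e ∈ E0, 0 < l e) ∧
  ∀ e₁ e₂ e₃ : Set E2, ({e₁, e₂, e₃} : Set (Set E2)) = E0 → l e₁ + l e₂ > l e₃

/-- A linear map `f : ℝ² → ℝ²` realizes the edge lengths `l`, i.e. for each `e ∈ E₀`
the segment `f(e)` has Euclidean length `l e`. -/
def Realizes (f : E2 →ₗ[ℝ] E2) (l : Set E2 → ℝ) : Prop :=
  dist (f p0) (f p1) = l e01 ∧ dist (f p1) (f p2) = l e12 ∧ dist (f p0) (f p2) = l e02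

/-- The metric `d[l]` on `Dtri`, defined by `d[l](x,y) = |f x - f y|₂` for a linear map `f`
realizing the edge lengths `l` (this is independent of the choice of `f`). -/
def dD (l : Set E2 → ℝ) (x y : E2) : ℝ :=
  letI := Classical.propDecidable (∃ f : E2 →ₗ[ℝ] E2, Realizes f l)
  if h : ∃ f : E2 →ₗ[ℝ] E2, Realizes f l then dist (h.choose x) (h.choose y) else 0

/-- A triangulation `T = (σᵢ)_{i ∈ I}`, `I = Fin n`, of a topological space `S`:
a finite family of continuous maps `σᵢ : Dtri → S` such that
(a) `σᵢ` is injective on each open edge, (b) `σᵢ` is injective on `D°`,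
(c) `S` is the disjoint union of `⋃ᵢ σᵢ(V₀)`, the sets `σᵢ(D°)`, and the distinct sets
among the `σᵢ(e°)`, and (d) glued edges are identified by a linear homeomorphism. -/
structure Triangulation (S : Type) [TopologicalSpace S] (n : ℕ) where
  σ : Fin n → E2 → S
  continuousOn : ∀ i, ContinuousOn (σ i) Dtri
  inj_edge : ∀ i, ∀ e ∈ E0, InjOn (σ i) (eo e)
  inj_int : ∀ i, InjOn (σ i) Do
  cover : (⋃ i, σ i '' V0) ∪ (⋃ i, σ i '' Do) ∪ (⋃ i, ⋃ e ∈ E0, σ i '' eo e) = univ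
  disj_int : ∀ i j, i ≠ j → Disjoint (σ i '' Do) (σ j '' Do)
  disj_vert_int : ∀ j, Disjoint (⋃ i, σ i '' V0) (σ j '' Do)
  disj_vert_edge : ∀ j, ∀ e ∈ E0, Disjoint (⋃ i, σ i '' V0) (σ j '' eo e)
  disj_int_edge : ∀ i j, ∀ e ∈ E0, Disjoint (σ i '' Do) (σ j '' eo e)
  edge_eq_or_disjoint : ∀ i j, ∀ e ∈ E0, ∀ e' ∈ E0,
    σ i '' eo e = σ j '' eo e' ∨ Disjoint (σ i '' eo e) (σ j '' eo e')
  glue : ∀ i j, ∀ e ∈ E0, ∀ e' ∈ E0, σ i '' eo e = σ j '' eo e' →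
    ∃ A : E2 →ᵃ[ℝ] E2, A '' e = e' ∧ ∀ x ∈ e, σ j (A x) = σ i x

variable {S : Type} [TopologicalSpace S] {n : ℕ}

/-- `l ∈ ℝ^{E(T)}_Δ`: `l` assigns positive lengths to the edges of `T` satisfying the
strict triangle inequalities in each triangle. -/
def TriIneqT (T : Triangulation S n) (l : Set S → ℝ) : Prop :=
  (∀ (i : Fin n), ∀ e ∈ E0, 0 < l (T.σ i '' e)) ∧
  ∀ (i : Fin n), ∀ e₁ e₂ e₃ : Set E2, ({e₁, e₂, e₃} : Set (Set E2)) = E0 →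
    l (T.σ i '' e₁) + l (T.σ i '' e₂) > l (T.σ i '' e₃)

/-- The restricted edge lengths `l^{(i)}` on the triangle `σᵢ(D)`: `l^{(i)}_e = l_{σᵢ(e)}`. -/
def lRes (T : Triangulation S n) (l : Set S → ℝ) (i : Fin n) : Set E2 → ℝ :=
  fun e => l (T.σ i '' e)

/-- `dᵢ(x,y) = min { d[l^{(i)}](x',y') : x' ∈ σᵢ⁻¹(x), y' ∈ σᵢ⁻¹(y) }` for `x, y ∈ σᵢ(D)`. -/
def dTri (T : Triangulation S n) (l : Set S → ℝ) (i : Fin n) (x y : S) : ℝ :=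
  sInf { r | ∃ x' ∈ Dtri, ∃ y' ∈ Dtri,
    T.σ i x' = x ∧ T.σ i y' = y ∧ r = dD (lRes T l i) x' y' }

/-- The set of sums `Σ_j d_{i_j}(x_{j-1}, x_j)` over chains from `x` to `y`. -/
def chainSums (T : Triangulation S n) (l : Set S → ℝ) (x y : S) : Set ℝ :=
  { r | ∃ (k : ℕ) (c : ℕ → S) (idx : ℕ → Fin n),
      c 0 = x ∧ c k = y ∧
      (∀ j < k, c j ∈ T.σ (idx j) '' Dtri ∧ c (j + 1) ∈ T.σ (idx j) '' Dtri) ∧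
      r = ∑ j ∈ Finset.range k, dTri T l (idx j) (c j) (c (j + 1)) }

/-- The glued metric `d[l]` on `S`. -/
def dGlue (T : Triangulation S n) (l : Set S → ℝ) (x y : S) : ℝ :=
  sInf (chainSums T l x y)

/-!
Follow an edge of `T` along the isotopy and unfold the track of the homotopy, triangle by triangle,
into the plane. Many triangles may share an edge, so the unfolding folds some of them onto each
other; still it is an isometry on every triangle and never increases the `d_T[l]`-distance. At one
end of the isotopy the developed curve is the straight edge, of length `l e`. At the other end the
pull-back hypothesis bounds the distance between its endpoints by `l' e`. The isotopy is proper on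
the complement of the vertices, so points of the edge close to its ends stay close to the vertices
throughout, and there the developed point stays near the developed corner, which does not move.
Hence `l e ≤ l' e`, and the reversed isotopy gives the opposite inequality.
-/

open Filter
open scoped Topology unitInterval

/-! ### Developing maps and isotopies -/

section CechCocycle

variable {X ι G : Type*} [TopologicalSpace X] [Group G]

/-- The principal bundle with discrete fibre `G` glued from a locally constant Čech cocycle `g` on
the open cover `U`; `G` acts on the fibres from the left, so transitions multiply on the right. -/
def cocycleBundleCore [TopologicalSpace G] [DiscreteTopology G] {U : ι → Set X}
    (isOpen : ∀ u, IsOpen (U u)) (cover : ∀ x, ∃ u, x ∈ U u) (g : ι → ι → X → G)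
    (locConst : ∀ u v, ∀ x ∈ U u ∩ U v, ∀ᶠ y in 𝓝 x, g u v y = g u v x)
    (cocycle : ∀ u v w, ∀ x ∈ U u ∩ U v ∩ U w, g u v x * g v w x = g u w x) :
    FiberBundleCore ι X G where
  baseSet := U
  isOpen_baseSet := isOpen
  indexAt x := (cover x).choose
  mem_baseSet_at x := (cover x).choose_spec
  coordChange u v x a := a * g u v x
  coordChange_self u x hx a := by
    have : g u u x = 1 := by simpa using cocycle u u u x ⟨⟨hx, hx⟩, hx⟩
    rw [this, mul_one]
  continuousOn_coordChange u v := by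
    rintro ⟨x, a⟩ ⟨hx, -⟩
    have hg : ContinuousAt (g u v) x := by
      rw [ContinuousAt, nhds_discrete G, tendsto_pure]
      exact locConst u v x hx
    exact (continuousAt_snd.mul (hg.comp continuousAt_fst)).continuousWithinAt
  coordChange_comp u v w x hx a := by rw [mul_assoc, cocycle u v w x hx]

theorem exists_locallyConstant_trivialization [SimplyConnectedSpace X]
    [LocallyPathConnectedSpace X] {U : ι → Set X} (isOpen : ∀ u, IsOpen (U u))
    (cover : ∀ x, ∃ u, x ∈ U u) (g : ι → ι → X → G)
    (locConst : ∀ u v, ∀ x ∈ U u ∩ U v, ∀ᶠ y in 𝓝 x, g u v y = g u v x)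
    (cocycle : ∀ u v w, ∀ x ∈ U u ∩ U v ∩ U w, g u v x * g v w x = g u w x) :
    ∃ k : ι → X → G, (∀ u, ∀ x ∈ U u, ∀ᶠ y in 𝓝 x, k u y = k u x) ∧
      ∀ u v, ∀ x ∈ U u ∩ U v, k u x * g u v x = k v x := by
  let : TopologicalSpace G := ⊥
  have : DiscreteTopology G := ⟨rfl⟩
  let Z := cocycleBundleCore isOpen cover g locConst cocycle
  have isCovering : IsCoveringMap (Bundle.TotalSpace.proj (F := G) (E := Z.Fiber)) :=
    IsFiberBundle.isCoveringMap (F := G) fun x => ⟨Z.localTrivAt x, Z.mem_baseSet_at x⟩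
  obtain ⟨x₀⟩ : Nonempty X := inferInstance
  obtain ⟨s, ⟨-, hs⟩, -⟩ := isCovering.existsUnique_continuousMap_lifts (ContinuousMap.id X) x₀
    (⟨x₀, (1 : G)⟩ : Bundle.TotalSpace G Z.Fiber) rfl
  have proj_s (x : X) : (s x).proj = x := congrFun hs x
  refine ⟨fun u x => (Z.localTriv u (s x)).2, fun u x hx => ?_, fun u v x hx => ?_⟩
  · have hc : ContinuousAt (fun y => (Z.localTriv u (s y)).2) x := by
      refine continuousAt_snd.comp
        (((Z.localTriv u).continuousAt ?_).comp s.continuous.continuousAt)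
      rwa [Z.mem_localTriv_source, proj_s]
    rwa [ContinuousAt, nhds_discrete G, tendsto_pure] at hc
  · have h := Z.coordChange_comp (Z.indexAt (s x).proj) u v (s x).proj
      ⟨⟨Z.mem_baseSet_at _, (proj_s x).symm ▸ hx.1⟩, (proj_s x).symm ▸ hx.2⟩ (s x).2
    exact (congrArg (fun y => (Z.localTriv u (s x)).2 * g u v y) (proj_s x)).symm.trans h

/-- The analogue for `G`-valued functions of the developing map of a `(G, X)`-structure. -/
theorem exists_developing [SimplyConnectedSpace X] [LocallyPathConnectedSpace X] {U : ι → Set X}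
    (isOpen : ∀ u, IsOpen (U u)) (cover : ∀ x, ∃ u, x ∈ U u) (h : ι → X → G)
    (locConst : ∀ u v, ∀ x ∈ U u ∩ U v,
      ∀ᶠ y in 𝓝 x, h u y * (h v y)⁻¹ = h u x * (h v x)⁻¹) :
    ∃ A : X → G, ∀ u, ∀ x ∈ U u, ∀ᶠ y in 𝓝 x, A y * (h u y)⁻¹ = A x * (h u x)⁻¹ := by
  obtain ⟨k, hk, hkk⟩ := exists_locallyConstant_trivialization isOpen cover
    (fun u v x => h u x * (h v x)⁻¹) locConst fun u v w x _ => by group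
  choose idx hidx using cover
  have eq_k (u : ι) (x : X) (hx : x ∈ U u) : k (idx x) x * h (idx x) x * (h u x)⁻¹ = k u x := by
    rw [mul_assoc, hkk _ _ _ ⟨hidx x, hx⟩]
  refine ⟨fun x => k (idx x) x * h (idx x) x, fun u x hx => ?_⟩
  filter_upwards [hk u x hx, (isOpen u).mem_nhds hx] with y hy hyu
  rw [eq_k u y hyu, eq_k u x hx, hy]

end CechCocycle

/-- Arens' theorem on the continuity of inversion in homeomorphism groups: nearby homeomorphisms
move the frontier of a compact neighbourhood `K` of the preimage of `x` off `x`, so the preimages of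
a connected neighbourhood of `x` are trapped in `K`. -/
theorem continuous_uncurry_homeomorph_symm {X Y : Type*} [TopologicalSpace X] [T2Space X]
    [LocallyCompactSpace X] [LocallyConnectedSpace X] [TopologicalSpace Y] {F : Y → X ≃ₜ X}
    (hF : Continuous fun p : Y × X => F p.1 p.2) :
    Continuous fun p : Y × X => (F p.1).symm p.2 := by
  rw [continuous_iff_continuousAt]
  rintro ⟨a, x⟩ O hO
  obtain ⟨K, hK, hKO, compact_K⟩ := local_compact_nhds hO
  set y := (F a).symm x
  have hFy : F a y = x := (F a).apply_symm_apply x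
  have avoids_frontier : ∀ᶠ p : Y × X in 𝓝 (a, x), ∀ z ∈ frontier K, F p.1 z ≠ p.2 := by
    refine (compact_K.of_isClosed_subset isClosed_frontier
      compact_K.isClosed.frontier_subset).eventually_forall_of_forall_eventually fun z hz => ?_
    have hFq : Continuous fun q : (Y × X) × X => F q.1.1 q.2 :=
      hF.comp (f := fun q : (Y × X) × X => (q.1.1, q.2)) (by fun_prop)
    refine (isOpen_ne_fun hFq continuous_fst.snd).mem_nhds fun h => hz.2 ?_
    rwa [show z = y from (F a).injective (h.trans hFy.symm), mem_interior_iff_mem_nhds]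
  rw [nhds_prod_eq] at avoids_frontier
  obtain ⟨P, hP, Q, hQ, hPQ⟩ := eventually_prod_iff.1 avoids_frontier
  obtain ⟨W, hWQ, W_open, hxW, W_conn⟩ :=
    locallyConnectedSpace_iff_subsets_isOpen_isConnected.1 ‹_› x {z | Q z} hQ
  have hFW : ∀ᶠ b in 𝓝 a, F b y ∈ W :=
    (hF.comp (by fun_prop : Continuous fun b : Y => (b, y))).continuousAt
      ((congrArg (W ∈ 𝓝 ·) hFy).mpr (W_open.mem_nhds hxW))
  rw [nhds_prod_eq, mem_map]
  filter_upwards [(hP.and hFW).prod_mk (W_open.mem_nhds hxW)] with p ⟨⟨hp, hpW⟩, hpx⟩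
  have misses_frontier : ((F p.1).symm '' W) ⊆ interior K ∪ Kᶜ := by
    rintro _ ⟨w, hw, rfl⟩
    by_contra! h
    simp only [mem_union, mem_compl_iff, not_or, not_not] at h
    exact hPQ hp (hWQ hw) _ ⟨subset_closure h.2, h.1⟩ ((F p.1).apply_symm_apply w)
  have preimage_conn := W_conn.isPreconnected.image _ (F p.1).symm.continuous.continuousOn
  refine hKO (interior_subset ?_)
  refine preimage_conn.subset_left_of_subset_union isOpen_interior compact_K.isClosed.isOpen_compl
    (disjoint_compl_right.mono_left interior_subset)
    misses_frontier ⟨y, ⟨F p.1 y, hpW, (F p.1).symm_apply_apply y⟩, mem_interior_iff_mem_nhds.2 hK⟩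
    (mem_image_of_mem _ hpx)

theorem isProperMap_uncurry_homeomorph {X Y : Type*} [TopologicalSpace X] [T2Space X]
    [LocallyCompactSpace X] [LocallyConnectedSpace X] [TopologicalSpace Y] [CompactSpace Y]
    {F : Y → X ≃ₜ X} (hF : Continuous fun p : Y × X => F p.1 p.2) :
    IsProperMap fun p : Y × X => F p.1 p.2 :=
  let track : Y × X ≃ₜ Y × X :=
    { toFun := fun p => (p.1, F p.1 p.2)
      invFun := fun p => (p.1, (F p.1).symm p.2)
      left_inv := fun p => by simp
      right_inv := fun p => by simp
      continuous_toFun := continuous_fst.prodMk hF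
      continuous_invFun := continuous_fst.prodMk (continuous_uncurry_homeomorph_symm hF) }
  isProperMap_snd_of_compactSpace.comp track.isProperMap

theorem dist_le_mul_sub_of_forall_eventually {E : Type*} [PseudoMetricSpace E] {f : ℝ → E}
    {C a b : ℝ} (hab : a ≤ b)
    (h : ∀ s ∈ Icc a b, ∀ᶠ t in 𝓝[Icc a b] s, dist (f s) (f t) ≤ C * dist s t) :
    dist (f a) (f b) ≤ C * (b - a) := by
  have cont : ContinuousOn f (Icc a b) := fun s hs => by
    refine tendsto_iff_dist_tendsto_zero.2 (squeeze_zero' (g := fun t => C * dist s t)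
      (Eventually.of_forall fun _ => dist_nonneg) ?_ ?_)
    · filter_upwards [h s hs] with t ht using dist_comm (f t) (f s) ▸ ht
    · exact tendsto_nhdsWithin_of_tendsto_nhds
        (Continuous.tendsto' (by fun_prop) s 0 (by simp))
  have closed : IsClosed ({t | dist (f a) (f t) ≤ C * (t - a)} ∩ Icc a b) := by
    rw [inter_comm]
    exact isClosed_Icc.isClosed_le (f := fun t => dist (f a) (f t)) (g := fun t => C * (t - a))
      (fun t ht => tendsto_const_nhds.dist (cont t ht)) (by fun_prop)
  refine closed.Icc_subset_of_forall_exists_gt (by simp) ?_ (right_mem_Icc.2 hab)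
  rintro s ⟨hs : dist (f a) (f s) ≤ C * (s - a), hsab⟩ y (hy : s < y)
  have near : ∀ᶠ t in 𝓝[>] s, dist (f s) (f t) ≤ C * dist s t :=
    (h s ⟨hsab.1, hsab.2.le⟩).filter_mono <| nhdsWithin_le_of_mem <|
      mem_of_superset (Ioc_mem_nhdsGT hsab.2)
        ((Ioc_subset_Ioc_left hsab.1).trans Ioc_subset_Icc_self)
  obtain ⟨t, hst, ht⟩ := (near.and (Ioc_mem_nhdsGT hy)).exists
  refine ⟨t, ?_, ht⟩
  rw [dist_comm s t, Real.dist_eq, abs_of_pos (sub_pos.2 ht.1)] at hst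
  calc dist (f a) (f t) ≤ dist (f a) (f s) + dist (f s) (f t) := dist_triangle _ _ _
    _ ≤ C * (t - a) := by linarith

theorem exists_isometryEquiv_apply_eq_pair {E : Type*} [NormedAddCommGroup E]
    [InnerProductSpace ℝ E] {a b a' b' : E} (h : dist a b = dist a' b') :
    ∃ τ : E ≃ᵢ E, τ a = a' ∧ τ b = b' := by
  have hn : ‖b - a‖ = ‖b' - a'‖ := by rwa [← dist_eq_norm, ← dist_eq_norm, dist_comm, dist_comm b']
  let ρ := Submodule.reflection (ℝ ∙ ((b - a) - (b' - a')))ᗮ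
  have hρ : ρ (b - a) = b' - a' := Submodule.reflection_sub hn
  refine ⟨((IsometryEquiv.subRight a).trans ρ.toIsometryEquiv).trans
    (IsometryEquiv.addRight a'), ?_, ?_⟩
  · simp
  · simp [hρ]

/-! ### Barycentric coordinates of the reference triangle -/

section BarycentricCoordinates

theorem apply_eq_sum_coord_smul {ι k V W : Type*} [Fintype ι] [Ring k] [AddCommGroup V]
    [Module k V] [AddCommGroup W] [Module k W] (b : AffineBasis ι k V) (f : V →ᵃ[k] W) (x : V) :
    f x = ∑ i, b.coord i x • f (b i) := by
  have sum_coord := b.sum_coord_apply_eq_one x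
  conv_lhs =>
    rw [← b.affineCombination_coord_eq_self x, Finset.map_affineCombination _ _ _ sum_coord,
      Finset.affineCombination_eq_linear_combination _ _ _ sum_coord]
  rfl

/-- The vertices of the reference triangle, indexed by `Fin 3`. -/
def corner : Fin 3 → E2 := ![p0, p1, p2]

/-- The closed edges of the reference triangle; `side k` is opposite to `corner k`. -/
def side : Fin 3 → Set E2 := ![e12, e02, e01]

theorem affineIndependent_corner : AffineIndependent ℝ corner := by
  rw [affineIndependent_iff_linearIndependent_vsub ℝ _ (0 : Fin 3),
    ← linearIndependent_equiv (finSuccAboveEquiv (0 : Fin 3))]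
  have vsub_eq : ((fun i : {c : Fin 3 // c ≠ 0} => corner i -ᵥ corner 0) ∘
      finSuccAboveEquiv (0 : Fin 3)) = ![p1, p2] := by
    funext i
    fin_cases i <;> ext j <;> fin_cases j <;> simp [corner, p0, p1, p2, finSuccAboveEquiv_apply]
  rw [vsub_eq, LinearIndependent.pair_iff]
  intro s t h
  have h0 : s + t * (1 / 2) = 0 := by simpa [p1, p2] using congrArg (fun v : E2 => v 0) h
  obtain rfl : t = 0 := by simpa [p1, p2] using congrArg (fun v : E2 => v 1) h
  exact ⟨by simpa using h0, rfl⟩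

/-- The vertices of the reference triangle as an affine basis of the plane. -/
def cornerBasis : AffineBasis (Fin 3) ℝ E2 where
  toFun := corner
  ind' := affineIndependent_corner
  tot' := by simp [affineIndependent_corner.affineSpan_eq_top_iff_card_eq_finrank_add_one]

/-- The barycentric coordinate of the plane belonging to `corner c`. -/
def bary (c : Fin 3) : E2 →ᵃ[ℝ] ℝ := cornerBasis.coord c

theorem continuous_bary (c : Fin 3) : Continuous (bary c) :=
  (bary c).continuous_of_finiteDimensional

theorem bary_corner (c d : Fin 3) : bary c (corner d) = if c = d then 1 else 0 :=
  cornerBasis.coord_apply c d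

theorem sum_bary (x : E2) : ∑ c, bary c x = 1 := cornerBasis.sum_coord_apply_eq_one x

theorem bary_ext {x y : E2} (h : ∀ c, bary c x = bary c y) : x = y :=
  cornerBasis.ext_elem h

theorem sum_bary_smul_corner (x : E2) : ∑ c, bary c x • corner c = x :=
  cornerBasis.linear_combination_coord_eq_self x

theorem affine_apply_eq_sum_bary {W : Type*} [AddCommGroup W] [Module ℝ W] (f : E2 →ᵃ[ℝ] W)
    (x : E2) : f x = ∑ c, bary c x • f (corner c) :=
  apply_eq_sum_coord_smul cornerBasis f x

theorem bary_sum_smul_corner {w : Fin 3 → ℝ} (hw : ∑ d, w d = 1) (e : Fin 3 → Fin 3) (c : Fin 3) :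
    bary c (∑ d, w d • corner (e d)) = ∑ d, w d * bary c (corner (e d)) := by
  rw [← Finset.univ.affineCombination_eq_linear_combination (fun d => corner (e d)) w hw,
    Finset.map_affineCombination _ _ _ hw, Finset.affineCombination_eq_linear_combination _ _ _ hw]
  rfl

theorem corner_injective : Function.Injective corner := affineIndependent_corner.injective

theorem range_corner : range corner = V0 := by
  simp only [corner, Matrix.range_cons, Matrix.range_empty, V0, union_empty, singleton_union]

theorem mem_V0 {x : E2} : x ∈ V0 ↔ ∃ c, x = corner c := by
  simp [← range_corner, eq_comm]

theorem mem_Dtri {x : E2} : x ∈ Dtri ↔ ∀ c, 0 ≤ bary c x := by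
  have : Dtri = convexHull ℝ (range cornerBasis) := congrArg (convexHull ℝ) range_corner.symm
  rw [this, cornerBasis.convexHull_eq_nonneg_coord]
  rfl

theorem mem_Do {x : E2} : x ∈ Do ↔ ∀ c, 0 < bary c x := by
  have : Do = interior (convexHull ℝ (range cornerBasis)) :=
    congrArg (interior <| convexHull ℝ ·) range_corner.symm
  rw [this, cornerBasis.interior_convexHull]
  rfl

theorem isCompact_Dtri : IsCompact Dtri :=
  Set.Finite.isCompact_convexHull ℝ (s := V0) (by simp [V0])

theorem corner_mem_Dtri (c : Fin 3) : corner c ∈ Dtri :=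
  mem_Dtri.2 fun d => by rw [bary_corner]; split_ifs <;> norm_num

theorem bary_add_bary_le_one {x : E2} (hx : x ∈ Dtri) {c d : Fin 3} (hcd : c ≠ d) :
    bary c x + bary d x ≤ 1 := by
  rw [← sum_bary x, ← Finset.sum_pair (f := fun c => bary c x) hcd]
  exact Finset.sum_le_univ_sum_of_nonneg (mem_Dtri.1 hx)

theorem eq_of_half_lt_bary {x : E2} (hx : x ∈ Dtri) {c d : Fin 3} (hc : 1 / 2 < bary c x)
    (hd : 1 / 2 < bary d x) : c = d := by
  by_contra hcd
  linarith [bary_add_bary_le_one hx hcd]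

theorem eq_corner_of_bary_eq_one {x : E2} (hx : x ∈ Dtri) {c : Fin 3} (hc : bary c x = 1) :
    x = corner c := by
  refine bary_ext fun d => ?_
  rw [bary_corner]
  split_ifs with h
  · rw [h, hc]
  · exact le_antisymm (by linarith [bary_add_bary_le_one hx h]) (mem_Dtri.1 hx d)

theorem E0_eq_range_side : E0 = range side := by
  simp only [side, Matrix.range_cons, Matrix.range_empty, E0, union_empty, singleton_union]
  ext e
  simp only [mem_insert_iff, mem_singleton_iff]
  tauto

theorem side_mem_E0 (k : Fin 3) : side k ∈ E0 := E0_eq_range_side ▸ mem_range_self k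

theorem side_eq_segment {c d k : Fin 3} (hck : c ≠ k) (hdk : d ≠ k) (hcd : c ≠ d) :
    side k = segment ℝ (corner c) (corner d) := by
  fin_cases k <;> fin_cases c <;> fin_cases d <;>
    first | contradiction | rfl | exact segment_symm ℝ _ _

theorem exists_ne_ne (k : Fin 3) : ∃ c d : Fin 3, c ≠ k ∧ d ≠ k ∧ c ≠ d := by decide +revert

theorem sum_eq_add_add {c d k : Fin 3} (hck : c ≠ k) (hdk : d ≠ k) (hcd : c ≠ d) {M : Type*}
    [AddCommMonoid M] (w : Fin 3 → M) : ∑ e, w e = w k + (w c + w d) := by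
  have : (Finset.univ : Finset (Fin 3)) = {k, c, d} := by decide +revert
  rw [this, Finset.sum_insert (by simp [hck.symm, hdk.symm]), Finset.sum_pair hcd]

theorem mem_side {k : Fin 3} {x : E2} : x ∈ side k ↔ x ∈ Dtri ∧ bary k x = 0 := by
  obtain ⟨c, d, hck, hdk, hcd⟩ := exists_ne_ne k
  rw [side_eq_segment hck hdk hcd]
  constructor
  · intro hx
    refine ⟨(convex_convexHull ℝ _).segment_subset (corner_mem_Dtri c) (corner_mem_Dtri d) hx, ?_⟩
    rw [segment_eq_image_lineMap] at hx
    obtain ⟨t, -, rfl⟩ := hx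
    simp [AffineMap.apply_lineMap, bary_corner, hck.symm, hdk.symm]
  · rintro ⟨hx, hk⟩
    have hsum := sum_bary x
    have hcomb := sum_bary_smul_corner x
    rw [sum_eq_add_add hck hdk hcd, hk, zero_add] at hsum
    rw [sum_eq_add_add hck hdk hcd, hk, zero_smul, zero_add] at hcomb
    exact ⟨_, _, mem_Dtri.1 hx c, mem_Dtri.1 hx d, hsum, hcomb⟩

theorem corner_mem_side {c k : Fin 3} (hck : c ≠ k) : corner c ∈ side k :=
  mem_side.2 ⟨corner_mem_Dtri c, by rw [bary_corner, if_neg hck.symm]⟩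

end BarycentricCoordinates

/-! ### Open faces, sectors and realizations -/

section Faces

/-- The open faces of the reference triangle of positive dimension: `none` stands for the interior
and `some k` for the open edge opposite to `corner k`. -/
def openFace : Option (Fin 3) → Set E2
  | none => Do
  | some k => eo (side k)

/-- A neighbourhood of `openFace m` in the reference triangle, chosen such that the sectors of
distinct edges are disjoint; the sector of an edge consists of the points closer to it than to the
other two edges. -/
def sector : Option (Fin 3) → Set E2
  | none => Do
  | some k => {x ∈ Dtri | ∀ c ≠ k, bary k x < bary c x}

theorem mem_eo_side {k : Fin 3} {x : E2} :
    x ∈ eo (side k) ↔ bary k x = 0 ∧ ∀ c ≠ k, 0 < bary c x := by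
  constructor
  · rintro ⟨hx, hV⟩
    obtain ⟨hx, hk⟩ := mem_side.1 hx
    refine ⟨hk, fun c hc => (mem_Dtri.1 hx c).lt_of_ne' fun hc0 => hV ?_⟩
    obtain ⟨d, hd, hdc⟩ := Fin.exists_ne_and_ne_of_two_lt k c (by decide)
    refine mem_V0.2 ⟨d, eq_corner_of_bary_eq_one hx ?_⟩
    simpa [sum_eq_add_add hc hd hdc.symm, hk, hc0] using sum_bary x
  · rintro ⟨hk, hpos⟩
    refine ⟨mem_side.2 ⟨mem_Dtri.2 fun c => ?_, hk⟩, fun hV => ?_⟩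
    · obtain rfl | hc := eq_or_ne c k
      exacts [hk.ge, (hpos c hc).le]
    · obtain ⟨d, rfl⟩ := mem_V0.1 hV
      obtain ⟨c, hck, hcd⟩ := Fin.exists_ne_and_ne_of_two_lt k d (by decide)
      exact (hpos c hck).ne' (by rw [bary_corner, if_neg hcd])

theorem mem_openFace {m : Option (Fin 3)} {x : E2} :
    x ∈ openFace m ↔ ∀ c, (m = some c → bary c x = 0) ∧ (m ≠ some c → 0 < bary c x) := by
  cases m with
  | none => simp [openFace, mem_Do]
  | some k => simp [openFace, mem_eo_side, forall_and, eq_comm]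

theorem openFace_subset_Dtri (m : Option (Fin 3)) : openFace m ⊆ Dtri := fun x hx =>
  mem_Dtri.2 fun c => by
    by_cases hc : m = some c
    exacts [((mem_openFace.1 hx c).1 hc).ge, ((mem_openFace.1 hx c).2 hc).le]

theorem openFace_nonempty (m : Option (Fin 3)) : (openFace m).Nonempty := by
  let w : Fin 3 → ℝ := fun c => if m = none then 1 / 3 else if m = some c then 0 else 1 / 2
  have hw : ∑ c, w c = 1 := by
    rcases m with - | k
    · simp [w]
    · fin_cases k <;> simp [w, Fin.sum_univ_three] <;> norm_num
  have bary_eq (c : Fin 3) : bary c (∑ d, w d • corner d) = w c :=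
    (bary_sum_smul_corner hw id c).trans (by simp [bary_corner])
  refine ⟨∑ c, w c • corner c, mem_openFace.2 fun c => ?_⟩
  rw [bary_eq]
  rcases m with - | k
  · simp [w]
  · exact ⟨fun h => by simp [w, h], fun h => by simp only [w, if_neg h]; simp⟩

theorem openSegment_subset_openFace {m : Option (Fin 3)} {x a : E2} (hx : x ∈ Dtri)
    (hm : ∀ c ∈ m, bary c x = 0) (ha : a ∈ openFace m) : openSegment ℝ x a ⊆ openFace m := by
  rintro _ ⟨s, t, hs, ht, hst, rfl⟩
  refine mem_openFace.2 fun c => ?_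
  rw [Convex.combo_affine_apply hst]
  exact ⟨fun hc => by simp [hm c hc, (mem_openFace.1 ha c).1 hc], fun hc =>
    add_pos_of_nonneg_of_pos (mul_nonneg hs.le (mem_Dtri.1 hx c)) (mul_pos ht
      ((mem_openFace.1 ha c).2 hc))⟩

theorem convex_openFace (m : Option (Fin 3)) : Convex ℝ (openFace m) :=
  convex_iff_openSegment_subset.2 fun _ ha _ hb => openSegment_subset_openFace
    (openFace_subset_Dtri m ha) (fun c hc => (mem_openFace.1 ha c).1 hc) hb

theorem mem_closure_openFace {m : Option (Fin 3)} {x : E2} (hx : x ∈ Dtri)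
    (hm : ∀ c ∈ m, bary c x = 0) : x ∈ closure (openFace m) := by
  obtain ⟨a, ha⟩ := openFace_nonempty m
  exact closure_mono (openSegment_subset_openFace hx hm ha)
    (closure_openSegment (𝕜 := ℝ) x a ▸ left_mem_segment ℝ x a)

theorem exists_mem_openFace {x : E2} (hx : x ∈ Dtri) (hV : x ∉ V0) : ∃ m, x ∈ openFace m := by
  by_cases h : ∀ c, 0 < bary c x
  · exact ⟨none, mem_Do.2 h⟩
  · push Not at h
    obtain ⟨k, hk⟩ := h
    exact ⟨some k, mem_side.2 ⟨hx, hk.antisymm (mem_Dtri.1 hx k)⟩, hV⟩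

theorem sector_subset_Dtri : ∀ m, sector m ⊆ Dtri
  | none => interior_subset
  | some _ => fun _ hx => hx.1

theorem openFace_subset_sector : ∀ m, openFace m ⊆ sector m
  | none => subset_rfl
  | some k => fun x hx => by
      refine ⟨openFace_subset_Dtri _ hx, fun c hc => ?_⟩
      rw [(mem_eo_side.1 hx).1]
      exact (mem_eo_side.1 hx).2 c hc

theorem corner_notMem_sector (c : Fin 3) : ∀ m, corner c ∉ sector m
  | none => fun h => by
      obtain ⟨d, -, hdc, -⟩ := exists_ne_ne c
      simpa [bary_corner, hdc] using mem_Do.1 h d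
  | some k => fun h => by
      obtain ⟨d, hdk, hdc⟩ := Fin.exists_ne_and_ne_of_two_lt k c (by decide)
      have := h.2 d hdk
      rw [bary_corner d, if_neg hdc] at this
      exact this.not_ge (mem_Dtri.1 (corner_mem_Dtri c) k)

theorem exists_mem_openFace_of_mem_sector {m : Option (Fin 3)} {x : E2} (hx : x ∈ sector m) :
    ∃ m', x ∈ openFace m' := by
  refine exists_mem_openFace (sector_subset_Dtri m hx) fun hV => ?_
  obtain ⟨c, rfl⟩ := mem_V0.1 hV
  exact corner_notMem_sector c m hx

theorem sector_some_injective {k k' : Fin 3} {x : E2} (hx : x ∈ sector (some k))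
    (hx' : x ∈ sector (some k')) : k = k' := by
  by_contra h
  exact (hx.2 k' (Ne.symm h)).asymm (hx'.2 k h)

theorem eq_or_eq_none_of_mem_sector {m m' : Option (Fin 3)} {x : E2} (hx : x ∈ sector m)
    (hx' : x ∈ openFace m') : m' = m ∨ m' = none := by
  match m, m' with
  | _, none => exact Or.inr rfl
  | none, some k => exact absurd (mem_eo_side.1 hx').1 (mem_Do.1 hx k).ne'
  | some k, some k' =>
    exact Or.inl (congrArg some (sector_some_injective (openFace_subset_sector _ hx') hx))

theorem exists_isOpen_sector_eq_inter : ∀ m, ∃ O, IsOpen O ∧ sector m = Dtri ∩ O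
  | none => ⟨Do, isOpen_interior, (inter_eq_right.2 interior_subset).symm⟩
  | some k => ⟨⋂ c ≠ k, {x | bary k x < bary c x},
      isOpen_iInter_of_finite fun c => isOpen_iInter_of_finite fun _ =>
        isOpen_lt (continuous_bary k) (continuous_bary c), by ext; simp [sector]⟩

theorem sector_mem_nhdsWithin {m : Option (Fin 3)} {x : E2} (hx : x ∈ sector m) :
    sector m ∈ 𝓝[Dtri] x := by
  obtain ⟨O, hO, hm⟩ := exists_isOpen_sector_eq_inter m
  rw [hm] at hx ⊢
  exact inter_mem_nhdsWithin _ (hO.mem_nhds hx.2)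

theorem isCompact_Dtri_diff_sector (m : Option (Fin 3)) : IsCompact (Dtri \ sector m) := by
  obtain ⟨O, hO, hm⟩ := exists_isOpen_sector_eq_inter m
  rw [hm, sdiff_self_inter]
  exact isCompact_Dtri.diff hO

end Faces

section Realization

theorem dist_add_dist_eq_of_collinear {V P : Type*} [NormedAddCommGroup V] [NormedSpace ℝ V]
    [PseudoMetricSpace P] [NormedAddTorsor V P] {x y z : P} (h : Collinear ℝ {x, y, z}) :
    dist x y + dist y z = dist x z ∨ dist y z + dist x z = dist x y ∨
      dist x z + dist x y = dist y z := by
  rcases h.wbtw_or_wbtw_or_wbtw with h | h | h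
  · exact Or.inl h.dist_add_dist
  · exact Or.inr (Or.inl (by simpa only [dist_comm] using h.dist_add_dist))
  · exact Or.inr (Or.inr (by simpa only [dist_comm] using h.dist_add_dist))

theorem exists_triangle_of_sides {a b c : ℝ} (ha : 0 < a) (hb : 0 < b) (hc : 0 < c)
    (hab : c ≤ a + b) (hbc : a ≤ b + c) (hca : b ≤ c + a) :
    ∃ u w : E2, ‖u‖ = a ∧ ‖u - w‖ = b ∧ ‖w‖ = c := by
  -- the law of cosines
  set X : ℝ := (a ^ 2 + c ^ 2 - b ^ 2) / (2 * a) with hX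
  have two_mul_X : 2 * a * X = a ^ 2 + c ^ 2 - b ^ 2 := by rw [hX]; field_simp
  have heron : (2 * a) ^ 2 * (c ^ 2 - X ^ 2) = ((a + c) ^ 2 - b ^ 2) * (b ^ 2 - (a - c) ^ 2) := by
    linear_combination -(2 * a * X + (a ^ 2 + c ^ 2 - b ^ 2)) * two_mul_X
  have nonneg : 0 ≤ c ^ 2 - X ^ 2 := by
    refine nonneg_of_mul_nonneg_right (a := (2 * a) ^ 2) ?_ (by positivity)
    rw [heron]
    exact mul_nonneg (by nlinarith) (by nlinarith)
  have sq_sqrt := Real.sq_sqrt nonneg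
  refine ⟨!₂[a, 0], !₂[X, √(c ^ 2 - X ^ 2)], ?_, ?_, ?_⟩ <;>
    rw [EuclideanSpace.norm_eq, Real.sqrt_eq_iff_mul_self_eq (by positivity) (by positivity)] <;>
    simp only [PiLp.sub_apply, Real.norm_eq_abs, sq_abs, Fin.sum_univ_two, Matrix.cons_val_zero,
      Matrix.cons_val_one, Matrix.cons_val_fin_one] <;> nlinarith

theorem TriIneq.side_lt_add {L : Set E2 → ℝ} (h : TriIneq L) {c d k : Fin 3} (hck : c ≠ k)
    (hdk : d ≠ k) (hcd : c ≠ d) : L (side k) < L (side c) + L (side d) := by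
  refine h.2 _ _ _ ?_
  have : ({c, d, k} : Set (Fin 3)) = univ := by
    ext e; simp only [mem_insert_iff, mem_singleton_iff, mem_univ, iff_true]; decide +revert
  rw [E0_eq_range_side, ← image_univ, ← this, image_insert_eq, image_pair]

theorem exists_realizes {L : Set E2 → ℝ} (h : TriIneq L) : ∃ f : E2 →ₗ[ℝ] E2, Realizes f L := by
  obtain ⟨u, w, hu, huw, hw⟩ := exists_triangle_of_sides (h.1 _ (side_mem_E0 2))
    (h.1 _ (side_mem_E0 0)) (h.1 _ (side_mem_E0 1))
    (h.side_lt_add (k := 1) (by decide) (by decide) (by decide)).le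
    (h.side_lt_add (k := 2) (by decide) (by decide) (by decide)).le
    (h.side_lt_add (k := 0) (by decide) (by decide) (by decide)).le
  have p0_eq : p0 = 0 := by ext j; fin_cases j <;> simp [p0]
  have linear_corner (c d : Fin 3) (hc : c ≠ 0) :
      (bary c).linear (corner d) = if c = d then 1 else 0 := by
    have := (bary c).linearMap_vsub (corner d) (corner 0)
    rwa [show corner 0 = 0 from p0_eq, vsub_eq_sub, sub_zero, ← show corner 0 = 0 from p0_eq,
      bary_corner, bary_corner, if_neg hc, vsub_eq_sub, sub_zero] at this
  let f := (bary 1).linear.smulRight u + (bary 2).linear.smulRight w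
  have f0 : f p0 = 0 := by rw [p0_eq, map_zero]
  have f1 : f p1 = u := by simp [f, show p1 = corner 1 from rfl, linear_corner]
  have f2 : f p2 = w := by simp [f, show p2 = corner 2 from rfl, linear_corner]
  exact ⟨f, by rwa [f0, f1, dist_zero_left], by rwa [f1, f2, dist_eq_norm],
    by rwa [f0, f2, dist_zero_left]⟩

/-- The linear map by which `dD L` measures distances; the junk value `0` is taken if no linear map
realizes the edge lengths `L`. -/
def realization (L : Set E2 → ℝ) : E2 →ₗ[ℝ] E2 :=
  letI := Classical.propDecidable (∃ f : E2 →ₗ[ℝ] E2, Realizes f L)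
  if h : ∃ f : E2 →ₗ[ℝ] E2, Realizes f L then h.choose else 0

theorem dD_eq_dist_realization (L : Set E2 → ℝ) (x y : E2) :
    dD L x y = dist (realization L x) (realization L y) := by
  unfold dD realization
  split_ifs <;> simp

theorem TriIneq.realizes_realization {L : Set E2 → ℝ} (h : TriIneq L) :
    Realizes (realization L) L := by
  unfold realization
  rw [dif_pos (exists_realizes h)]
  exact (exists_realizes h).choose_spec

theorem Realizes.dist_corner {f : E2 →ₗ[ℝ] E2} {L : Set E2 → ℝ} (h : Realizes f L)
    {c d k : Fin 3} (hck : c ≠ k) (hdk : d ≠ k) (hcd : c ≠ d) :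
    dist (f (corner c)) (f (corner d)) = L (side k) := by
  obtain ⟨h01, h12, h02⟩ := h
  fin_cases k <;> fin_cases c <;> fin_cases d <;>
    first | contradiction | assumption | (rw [dist_comm]; assumption)

theorem Realizes.injective {f : E2 →ₗ[ℝ] E2} {L : Set E2 → ℝ} (hf : Realizes f L) (h : TriIneq L) :
    Function.Injective f := by
  have not_collinear : ¬ Collinear ℝ {f (corner 0), f (corner 1), f (corner 2)} := fun hcol => by
    have h01 := hf.dist_corner (c := 0) (d := 1) (k := 2) (by decide) (by decide) (by decide)
    have h12 := hf.dist_corner (c := 1) (d := 2) (k := 0) (by decide) (by decide) (by decide)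
    have h02 := hf.dist_corner (c := 0) (d := 2) (k := 1) (by decide) (by decide) (by decide)
    have t0 := h.side_lt_add (c := 1) (d := 2) (k := 0) (by decide) (by decide) (by decide)
    have t1 := h.side_lt_add (c := 0) (d := 2) (k := 1) (by decide) (by decide) (by decide)
    have t2 := h.side_lt_add (c := 0) (d := 1) (k := 2) (by decide) (by decide) (by decide)
    rcases dist_add_dist_eq_of_collinear hcol with h | h | h <;> linarith
  have indep : AffineIndependent ℝ ![f (corner 0), f (corner 1), f (corner 2)] :=
    affineIndependent_iff_not_collinear_set.2 not_collinear
  have eq_comp : ![f (corner 0), f (corner 1), f (corner 2)] = f ∘ corner := by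
    funext c; fin_cases c <;> rfl
  rw [eq_comp, affineIndependent_iff] at indep
  refine fun x y hxy => bary_ext fun c => sub_eq_zero.1 ?_
  refine indep Finset.univ (fun c => bary c x - bary c y) ?_ ?_ c (Finset.mem_univ c)
  · rw [Finset.sum_sub_distrib, sum_bary, sum_bary, sub_self]
  · have apply_eq := affine_apply_eq_sum_bary f.toAffineMap
    simp only [LinearMap.coe_toAffineMap] at apply_eq
    simp [sub_smul, Finset.sum_sub_distrib, ← apply_eq, hxy]

end Realization

/-! ### Cells and their stars -/

namespace Triangulation

variable (T : Triangulation S n)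

section Cells

/-- The vertices of the triangulation. -/
def vertexSet : Set S := ⋃ i, T.σ i '' V0

/-- The image in `S` of an open face of the `i`-th triangle: an open triangle or open edge. -/
def cell (i : Fin n) (m : Option (Fin 3)) : Set S := T.σ i '' openFace m

variable {T}

theorem disjoint_vertexSet_cell (i : Fin n) : ∀ m, Disjoint T.vertexSet (T.cell i m)
  | none => T.disj_vert_int i
  | some k => T.disj_vert_edge i _ (side_mem_E0 k)

theorem cell_eq_or_disjoint (i j : Fin n) :
    ∀ m m', T.cell i m = T.cell j m' ∨ Disjoint (T.cell i m) (T.cell j m')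
  | none, none => by
      obtain rfl | hij := eq_or_ne i j
      exacts [Or.inl rfl, Or.inr (T.disj_int i j hij)]
  | none, some k => Or.inr (T.disj_int_edge i j _ (side_mem_E0 k))
  | some k, none => Or.inr (T.disj_int_edge j i _ (side_mem_E0 k)).symm
  | some k, some k' => T.edge_eq_or_disjoint i j _ (side_mem_E0 k) _ (side_mem_E0 k')

theorem cell_eq_of_mem {i j : Fin n} {m m' : Option (Fin 3)} {x : S} (hx : x ∈ T.cell i m)
    (hx' : x ∈ T.cell j m') : T.cell i m = T.cell j m' :=
  (cell_eq_or_disjoint i j m m').resolve_right (not_disjoint_iff.2 ⟨x, hx, hx'⟩)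

theorem injOn_openFace (i : Fin n) : ∀ m, InjOn (T.σ i) (openFace m)
  | none => T.inj_int i
  | some k => T.inj_edge i _ (side_mem_E0 k)

theorem eq_of_cell_none_eq {i j : Fin n} {m : Option (Fin 3)} (h : T.cell i none = T.cell j m) :
    i = j ∧ m = none := by
  obtain ⟨x, hx⟩ : (T.cell i none).Nonempty := (openFace_nonempty none).image _
  have not_disjoint : ¬ Disjoint (T.cell i none) (T.cell j m) :=
    not_disjoint_iff.2 ⟨x, hx, h ▸ hx⟩
  rcases m with - | k
  · exact ⟨by_contra fun hij => not_disjoint (T.disj_int i j hij), rfl⟩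
  · exact absurd (T.disj_int_edge i j _ (side_mem_E0 k)) not_disjoint

theorem apply_mem_vertexSet_iff {i : Fin n} {a : E2} (ha : a ∈ Dtri) :
    T.σ i a ∈ T.vertexSet ↔ a ∈ V0 := by
  refine ⟨fun hV => by_contra fun haV => ?_, fun h => mem_iUnion.2 ⟨i, mem_image_of_mem _ h⟩⟩
  obtain ⟨m, hm⟩ := exists_mem_openFace ha haV
  exact (disjoint_vertexSet_cell i m).le_bot ⟨hV, mem_image_of_mem _ hm⟩

theorem exists_apply_eq (x : S) : ∃ i, ∃ a ∈ Dtri, T.σ i a = x := by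
  have V0_subset : V0 ⊆ Dtri := subset_convexHull ℝ V0
  have hx := T.cover.symm ▸ mem_univ x
  simp only [mem_union, mem_iUnion, mem_image] at hx
  obtain ((⟨i, a, ha, rfl⟩ | ⟨i, a, ha, rfl⟩) | ⟨i, e, he, a, ha, rfl⟩) := hx
  · exact ⟨i, a, V0_subset ha, rfl⟩
  · exact ⟨i, a, interior_subset ha, rfl⟩
  · obtain ⟨k, rfl⟩ := E0_eq_range_side ▸ he
    exact ⟨i, a, (mem_side.1 ha.1).1, rfl⟩

theorem exists_mem_cell {x : S} (hx : x ∉ T.vertexSet) : ∃ i m, x ∈ T.cell i m := by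
  obtain ⟨i, a, ha, rfl⟩ := T.exists_apply_eq x
  obtain ⟨m, hm⟩ := exists_mem_openFace ha (mt (apply_mem_vertexSet_iff ha).2 hx)
  exact ⟨i, m, a, hm, rfl⟩

theorem exists_mem_openFace_of_apply_mem_cell {i j : Fin n} {m : Option (Fin 3)} {b : E2}
    (hb : b ∈ Dtri) (h : T.σ j b ∈ T.cell i m) :
    ∃ m', T.cell j m' = T.cell i m ∧ b ∈ openFace m' := by
  have hbV : T.σ j b ∉ T.vertexSet := fun hV => (disjoint_vertexSet_cell i m).le_bot ⟨hV, h⟩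
  obtain ⟨m', hm'⟩ := exists_mem_openFace hb (mt (apply_mem_vertexSet_iff hb).2 hbV)
  exact ⟨m', cell_eq_of_mem (mem_image_of_mem _ hm') h, hm'⟩

theorem eq_of_apply_eq_of_mem_Do {i j : Fin n} {a b : E2} (ha : a ∈ Do) (hb : b ∈ Dtri)
    (h : T.σ i a = T.σ j b) : i = j ∧ a = b := by
  obtain ⟨m, hcell, hm⟩ := exists_mem_openFace_of_apply_mem_cell hb
    (show T.σ j b ∈ T.cell i none from ⟨a, ha, h⟩)
  obtain ⟨rfl, rfl⟩ := eq_of_cell_none_eq hcell.symm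
  exact ⟨rfl, T.inj_int i ha hm h⟩

end Cells

section Topology

/-- The quotient map assembling `S` from the disjoint union of its triangles. -/
def param (p : Σ _ : Fin n, Dtri) : S := T.σ p.1 p.2

theorem continuous_param : Continuous T.param :=
  continuous_sigma fun i => continuousOn_iff_continuous_domRestrict.1 (T.continuousOn i)

theorem surjective_param : Function.Surjective T.param := fun x => by
  obtain ⟨i, a, ha, rfl⟩ := T.exists_apply_eq x
  exact ⟨⟨i, a, ha⟩, rfl⟩

include T in
theorem compactSpace : CompactSpace S :=
  have := isCompact_iff_compactSpace.1 isCompact_Dtri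
  ⟨T.surjective_param.range_eq ▸ isCompact_range T.continuous_param⟩

theorem isClosedMap_param [T2Space S] : IsClosedMap T.param :=
  have := isCompact_iff_compactSpace.1 isCompact_Dtri
  T.continuous_param.isClosedMap

include T in
theorem locallyConnectedSpace [T2Space S] : LocallyConnectedSpace S := by
  have : LocallyPathConnectedSpace Dtri := (convex_convexHull ℝ V0).locallyPathConnectedSpace
  have := (T.isClosedMap_param.isQuotientMap T.continuous_param
    T.surjective_param).locallyPathConnectedSpace
  infer_instance

theorem isClosed_vertexSet [T2Space S] : IsClosed T.vertexSet :=
  isClosed_iUnion_of_finite fun i =>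
    (Set.Finite.image (T.σ i) (s := V0) (by simp [V0])).isClosed

variable {T}

theorem eventually_forall_apply_eq [T2Space S] {x : S} {p : Fin n → E2 → Prop}
    (h : ∀ i, ∀ a ∈ Dtri, T.σ i a = x → ∀ᶠ b in 𝓝[Dtri] a, p i b) :
    ∀ᶠ y in 𝓝 x, ∀ i, ∀ b ∈ Dtri, T.σ i b = y → p i b := by
  have := T.isClosedMap_param.eventually_nhds_fiber (p := fun q => p q.1 q.2) x ?_
  · filter_upwards [this] with y hy i b hb hby using hy ⟨i, b, hb⟩ hby
  · rintro ⟨i, a, ha⟩ rfl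
    rw [Sigma.nhds_mk, eventually_map]
    exact eventually_nhds_subtype_iff Dtri ⟨a, ha⟩ (p i) |>.2 (h i a ha rfl)

theorem eventually_nhds [T2Space S] {x : S} {p : S → Prop}
    (h : ∀ i, ∀ a ∈ Dtri, T.σ i a = x → ∀ᶠ b in 𝓝[Dtri] a, p (T.σ i b)) : ∀ᶠ y in 𝓝 x, p y := by
  filter_upwards [eventually_forall_apply_eq h] with y hy
  obtain ⟨i, b, hb, rfl⟩ := T.exists_apply_eq y
  exact hy i b hb rfl

end Topology

section Stars

/-- A neighbourhood of the cell `u` in `S`: the union of the sectors belonging to it. -/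
def star (u : Set S) : Set S := {x | ∃ i m, T.cell i m = u ∧ ∃ a ∈ sector m, T.σ i a = x}

variable {T}

theorem mem_star_of_mem_cell {i : Fin n} {m : Option (Fin 3)} {x : S} (hx : x ∈ T.cell i m) :
    x ∈ T.star (T.cell i m) := by
  obtain ⟨a, ha, rfl⟩ := hx
  exact ⟨i, m, rfl, a, openFace_subset_sector m ha, rfl⟩

theorem exists_mem_sector_of_apply_mem_star {u : Set S} {j : Fin n} {b : E2} (hb : b ∈ Dtri)
    (h : T.σ j b ∈ T.star u) : ∃ m, T.cell j m = u ∧ b ∈ sector m := by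
  obtain ⟨i, m, rfl, a, ha, hab⟩ := h
  obtain ⟨m₁, hm₁⟩ := exists_mem_openFace_of_mem_sector ha
  obtain rfl | rfl := eq_or_eq_none_of_mem_sector ha hm₁
  · obtain ⟨m₂, hcell, hm₂⟩ := exists_mem_openFace_of_apply_mem_cell hb
      (show T.σ j b ∈ T.cell i m₁ from ⟨a, hm₁, hab⟩)
    exact ⟨m₂, hcell, openFace_subset_sector _ hm₂⟩
  · obtain ⟨rfl, rfl⟩ := eq_of_apply_eq_of_mem_Do hm₁ hb hab
    exact ⟨m, rfl, ha⟩

theorem eq_of_mem_sector {j : Fin n} {m m' : Option (Fin 3)} {a : E2} (ha : a ∈ sector m)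
    (ha' : a ∈ sector m') (h : T.cell j m = T.cell j m') : m = m' := by
  match m, m' with
  | none, _ => exact (eq_of_cell_none_eq h).2.symm
  | _, none => exact (eq_of_cell_none_eq h.symm).2
  | some k, some k' => exact congrArg some (sector_some_injective ha ha')

theorem mem_openFace_of_apply_mem_cell {j : Fin n} {m : Option (Fin 3)} {b : E2}
    (hb : b ∈ sector m) (h : T.σ j b ∈ T.cell j m) : b ∈ openFace m := by
  obtain ⟨m', hcell, hm'⟩ := exists_mem_openFace_of_apply_mem_cell (sector_subset_Dtri m hb) h
  rwa [eq_of_mem_sector hb (openFace_subset_sector m' hm') hcell.symm]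

theorem mem_Do_of_mem_sector {j : Fin n} {m m' : Option (Fin 3)} {b : E2} (hb : b ∈ sector m)
    (hb' : b ∈ sector m') (h : T.cell j m ≠ T.cell j m') : b ∈ Do := by
  match m, m' with
  | none, _ => exact hb
  | _, none => exact hb'
  | some k, some k' => exact absurd (sector_some_injective hb hb' ▸ rfl) h

theorem isOpen_star [T2Space S] (u : Set S) : IsOpen (T.star u) := by
  refine isOpen_iff_mem_nhds.2 fun x hx => T.eventually_nhds fun i a ha hax => ?_
  obtain ⟨m, hm, ham⟩ := exists_mem_sector_of_apply_mem_star ha (hax ▸ hx)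
  filter_upwards [sector_mem_nhdsWithin ham] with b hb using ⟨i, m, hm, b, hb, rfl⟩

end Stars

end Triangulation

/-! ### Framings -/

section Relabelling

/-- The affine symmetry of the reference triangle permuting its corners by `π`. -/
def relabel (π : Equiv.Perm (Fin 3)) (x : E2) : E2 := ∑ c, bary c x • corner (π c)

theorem bary_relabel (π : Equiv.Perm (Fin 3)) (c : Fin 3) (x : E2) :
    bary (π c) (relabel π x) = bary c x := by
  simp [relabel, bary_sum_smul_corner (sum_bary x), bary_corner]

theorem relabel_one (x : E2) : relabel 1 x = x := sum_bary_smul_corner x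

theorem relabel_corner (π : Equiv.Perm (Fin 3)) (c : Fin 3) :
    relabel π (corner c) = corner (π c) := by
  simp [relabel, bary_corner]

theorem relabel_mul (π ρ : Equiv.Perm (Fin 3)) (x : E2) :
    relabel (π * ρ) x = relabel π (relabel ρ x) := by
  refine bary_ext fun c => ?_
  obtain ⟨d, rfl⟩ := (π * ρ).surjective c
  rw [bary_relabel, Equiv.Perm.mul_apply, bary_relabel, bary_relabel]

theorem relabel_mem_Dtri (π : Equiv.Perm (Fin 3)) {x : E2} (hx : x ∈ Dtri) :
    relabel π x ∈ Dtri := by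
  refine mem_Dtri.2 fun c => ?_
  obtain ⟨d, rfl⟩ := π.surjective c
  exact (bary_relabel π d x).symm ▸ mem_Dtri.1 hx d

theorem mapsTo_relabel_side (π : Equiv.Perm (Fin 3)) (k : Fin 3) :
    MapsTo (relabel π) (side k) (side (π k)) := fun x hx => by
  obtain ⟨hD, hk⟩ := mem_side.1 hx
  exact mem_side.2 ⟨relabel_mem_Dtri π hD, (bary_relabel π k x).trans hk⟩

theorem relabel_image_side (π : Equiv.Perm (Fin 3)) (k : Fin 3) :
    relabel π '' side k = side (π k) := by
  refine (mapsTo_relabel_side π k).image_subset.antisymm fun y hy =>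
    ⟨relabel π⁻¹ y, ?_, by rw [← relabel_mul, mul_inv_cancel, relabel_one]⟩
  simpa using mapsTo_relabel_side π⁻¹ (π k) hy

theorem relabel_mem_openFace (π : Equiv.Perm (Fin 3)) {m : Option (Fin 3)} {x : E2}
    (hx : x ∈ openFace m) : relabel π x ∈ openFace (m.map π) := by
  refine mem_openFace.2 fun c => ?_
  obtain ⟨d, rfl⟩ := π.surjective c
  rw [bary_relabel]
  have map_eq : m.map π = some (π d) ↔ m = some d := by
    rw [← Option.map_some, (Option.map_injective π.injective).eq_iff]
  rw [Ne, map_eq]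
  exact mem_openFace.1 hx d

theorem exists_perm_apply_eq {c d k c' d' k' : Fin 3} (hck : c ≠ k) (hdk : d ≠ k) (hcd : c ≠ d)
    (hck' : c' ≠ k') (hdk' : d' ≠ k') (hcd' : c' ≠ d') :
    ∃ π : Equiv.Perm (Fin 3), π c = c' ∧ π d = d' ∧ π k = k' := by
  decide +revert

end Relabelling

namespace Triangulation

variable {T : Triangulation S n}

section Gluing

theorem exists_perm_glue {i j : Fin n} {k k' : Fin 3}
    (h : T.cell i (some k) = T.cell j (some k')) :
    ∃ π : Equiv.Perm (Fin 3), π k = k' ∧ ∀ x ∈ side k, T.σ j (relabel π x) = T.σ i x := by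
  obtain ⟨A, hA, hglue⟩ := T.glue i j _ (side_mem_E0 k) _ (side_mem_E0 k') h
  have exists_corner {c : Fin 3} (hck : c ≠ k) : ∃ c', c' ≠ k' ∧ A (corner c) = corner c' := by
    have hside := corner_mem_side hck
    have hAside : A (corner c) ∈ side k' := hA ▸ mem_image_of_mem A hside
    have hV : A (corner c) ∈ V0 := by
      rw [← apply_mem_vertexSet_iff (T := T) (i := j) (mem_side.1 hAside).1, hglue _ hside,
        apply_mem_vertexSet_iff (corner_mem_Dtri c)]
      exact mem_V0.2 ⟨c, rfl⟩
    obtain ⟨c', hc'⟩ := mem_V0.1 hV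
    refine ⟨c', fun hck' => ?_, hc'⟩
    simpa [hc', hck', bary_corner] using (mem_side.1 hAside).2
  obtain ⟨c, d, hck, hdk, hcd⟩ := exists_ne_ne k
  obtain ⟨c', hck', hc'⟩ := exists_corner hck
  obtain ⟨d', hdk', hd'⟩ := exists_corner hdk
  have hcd' : c' ≠ d' := fun heq => by
    obtain ⟨p, q, hp, hq, hpq⟩ := exists_ne_ne k'
    have side_subset : side k' ⊆ {corner c'} := by
      rw [← hA, side_eq_segment hck hdk hcd, image_segment, hc', hd', heq, segment_same]
    exact hpq (corner_injective
      ((side_subset (corner_mem_side hp)).trans (side_subset (corner_mem_side hq)).symm))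
  obtain ⟨π, hπc, hπd, hπk⟩ := exists_perm_apply_eq hck hdk hcd hck' hdk' hcd'
  refine ⟨π, hπk, fun x hx => ?_⟩
  rw [← hglue x hx, affine_apply_eq_sum_bary, relabel, sum_eq_add_add hck hdk hcd,
    sum_eq_add_add hck hdk hcd, (mem_side.1 hx).2, zero_smul, zero_smul, hπc, hπd, hc', hd']

end Gluing

section Framings

variable (T) in
/-- The triangle with edge lengths `l` that represents the `i`-th triangle in the plane. -/
def layout (l : Set S → ℝ) (i : Fin n) : E2 →ₗ[ℝ] E2 := realization (lRes T l i)

variable (T) in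
theorem continuous_layout (l : Set S → ℝ) (i : Fin n) : Continuous (T.layout l i) :=
  (T.layout l i).continuous_of_finiteDimensional

variable {l : Set S → ℝ}

theorem _root_.TriIneqT.triIneq_lRes (hl : TriIneqT T l) (i : Fin n) : TriIneq (lRes T l i) :=
  ⟨hl.1 i, hl.2 i⟩

theorem _root_.TriIneqT.dist_layout_corner (hl : TriIneqT T l) (i : Fin n) {c d k : Fin 3}
    (hck : c ≠ k) (hdk : d ≠ k) (hcd : c ≠ d) :
    dist (T.layout l i (corner c)) (T.layout l i (corner d)) = l (T.σ i '' side k) :=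
  (hl.triIneq_lRes i).realizes_realization.dist_corner hck hdk hcd

theorem _root_.TriIneqT.layout_injective (hl : TriIneqT T l) (i : Fin n) :
    Function.Injective (T.layout l i) :=
  (hl.triIneq_lRes i).realizes_realization.injective (hl.triIneq_lRes i)

theorem exists_isometryEquiv_layout (hl : TriIneqT T l) {i j : Fin n} {k : Fin 3}
    {π : Equiv.Perm (Fin 3)} (h : ∀ x ∈ side k, T.σ j (relabel π x) = T.σ i x) :
    ∃ τ : E2 ≃ᵢ E2, ∀ x, bary k x = 0 → τ (T.layout l i x) = T.layout l j (relabel π x) := by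
  obtain ⟨c, d, hck, hdk, hcd⟩ := exists_ne_ne k
  have image_side : T.σ j '' side (π k) = T.σ i '' side k := by
    rw [← relabel_image_side, image_image]
    exact image_congr h
  obtain ⟨τ, hτc, hτd⟩ := exists_isometryEquiv_apply_eq_pair <|
    calc dist (T.layout l i (corner c)) (T.layout l i (corner d))
        = l (T.σ j '' side (π k)) := by rw [hl.dist_layout_corner i hck hdk hcd, image_side]
      _ = dist (T.layout l j (corner (π c))) (T.layout l j (corner (π d))) :=
        (hl.dist_layout_corner j (π.injective.ne hck) (π.injective.ne hdk)
          (π.injective.ne hcd)).symm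
  refine ⟨τ, fun x hx => ?_⟩
  have affine := affine_apply_eq_sum_bary
    (τ.toRealAffineIsometryEquiv.toAffineEquiv.toAffineMap.comp (T.layout l i).toAffineMap) x
  simp only [AffineMap.comp_apply, LinearMap.coe_toAffineMap] at affine
  rw [relabel, map_sum]
  simp only [map_smul]
  refine affine.trans ?_
  rw [sum_eq_add_add hck hdk hcd, sum_eq_add_add hck hdk hcd, hx, zero_smul, zero_smul]
  exact congrArg₂ (fun y z => 0 + (bary c x • y + bary d x • z)) hτc hτd

/-- A gluing of the `i`-th to the `j`-th triangle along a cell of which `m` and `m'` are the open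
faces: `π` matches the corners of the two triangles and `τ` carries the face of the first layout
onto that of the second. -/
structure IsGluing (T : Triangulation S n) (l : Set S → ℝ) (i j : Fin n)
    (m m' : Option (Fin 3)) (π : Equiv.Perm (Fin 3)) (τ : E2 ≃ᵢ E2) : Prop where
  map_eq : m' = m.map π
  apply_relabel : ∀ x ∈ openFace m, T.σ j (relabel π x) = T.σ i x
  layout_relabel : ∀ x, (∀ c ∈ m, bary c x = 0) →
    τ (T.layout l i x) = T.layout l j (relabel π x)

theorem exists_isGluing (hl : TriIneqT T l) {i j : Fin n} {m m' : Option (Fin 3)}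
    (h : T.cell i m = T.cell j m') : ∃ π τ, T.IsGluing l i j m m' π τ := by
  match m, m' with
  | none, m' =>
    obtain ⟨rfl, rfl⟩ := eq_of_cell_none_eq h
    exact ⟨1, 1, rfl, fun x _ => by rw [relabel_one], fun x _ => by rw [relabel_one]; rfl⟩
  | some k, none => exact absurd (eq_of_cell_none_eq h.symm).2 (by simp)
  | some k, some k' =>
    obtain ⟨π, rfl, hσ⟩ := exists_perm_glue h
    obtain ⟨τ, hτ⟩ := exists_isometryEquiv_layout hl hσ
    exact ⟨π, τ, rfl, fun x hx => hσ x hx.1, fun x hx => hτ x (hx k rfl)⟩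

theorem IsGluing.exists_perm_eq_relabel {i j r : Fin n} {m m' s : Option (Fin 3)}
    {π π' : Equiv.Perm (Fin 3)} {τ τ' : E2 ≃ᵢ E2} (h : T.IsGluing l i r m s π τ)
    (h' : T.IsGluing l j r m' s π' τ') {a b : E2} (ha : a ∈ openFace m) (hb : b ∈ openFace m')
    (hab : T.σ i a = T.σ j b) :
    ∃ ρ : Equiv.Perm (Fin 3), b = relabel ρ a ∧ ∀ x, (∀ c, bary c a = 0 → bary c x = 0) →
      τ (T.layout l i x) = τ' (T.layout l j (relabel ρ x)) := by
  have relabel_eq : relabel π a = relabel π' b := by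
    refine injOn_openFace (T := T) r s ?_ ?_ ?_
    · rw [h.map_eq]; exact relabel_mem_openFace _ ha
    · rw [h'.map_eq]; exact relabel_mem_openFace _ hb
    · rw [h.apply_relabel _ ha, h'.apply_relabel _ hb, hab]
  have hb_eq : b = relabel (π'⁻¹ * π) a := by
    rw [relabel_mul, relabel_eq, ← relabel_mul, inv_mul_cancel, relabel_one]
  refine ⟨π'⁻¹ * π, hb_eq, fun x hx => ?_⟩
  have hxm : ∀ c ∈ m, bary c x = 0 := fun c hc => hx c ((mem_openFace.1 ha c).1 hc)
  have hxm' : ∀ c ∈ m', bary c (relabel (π'⁻¹ * π) x) = 0 := fun c hc => by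
    obtain ⟨d, rfl⟩ := (π'⁻¹ * π).surjective c
    have hbc := (mem_openFace.1 hb _).1 hc
    rw [hb_eq, bary_relabel] at hbc
    rw [bary_relabel, hx d hbc]
  rw [h.layout_relabel x hxm, h'.layout_relabel _ hxm', ← relabel_mul, mul_inv_cancel_left]

/-- Isometries placing the triangles around each cell in the plane: `frame i m` places the
`i`-th triangle in the star of `cell i m`, and triangles that meet in the star are placed
compatibly along the smallest face containing the common point `σ i a = σ j b`. Triangles sharing
a cell are allowed to overlap in the plane. -/
structure Framing (T : Triangulation S n) (l : Set S → ℝ) where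
  frame : Fin n → Option (Fin 3) → E2 ≃ᵢ E2
  compat : ∀ {i j m m' a b}, a ∈ sector m → b ∈ sector m' → T.cell i m = T.cell j m' →
    T.σ i a = T.σ j b → ∃ π : Equiv.Perm (Fin 3), b = relabel π a ∧
      ∀ x, (∀ c, bary c a = 0 → bary c x = 0) →
        frame i m (T.layout l i x) = frame j m' (T.layout l j (relabel π x))

theorem exists_framing (hl : TriIneqT T l) : Nonempty (Framing T l) := by
  let f : Fin n × Option (Fin 3) → Set S := fun p => T.cell p.1 p.2
  let ref (p) := rangeSplitting f (rangeFactorization f p)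
  have cell_ref (p) : f p = f (ref p) := (apply_rangeSplitting f (rangeFactorization f p)).symm
  choose π τ gluing using fun p => exists_isGluing hl (cell_ref p)
  refine ⟨⟨fun i m => τ (i, m), fun {i j m m' a b} ha hb hcell hab => ?_⟩⟩
  obtain ⟨m₁, hm₁⟩ := exists_mem_openFace_of_mem_sector ha
  obtain rfl | rfl := eq_or_eq_none_of_mem_sector ha hm₁
  · have hb' : b ∈ openFace m' := mem_openFace_of_apply_mem_cell hb
      (show T.σ j b ∈ T.cell j m' from hcell ▸ ⟨a, hm₁, hab⟩)
    have hq : ref (j, m') = ref (i, m₁) := congrArg (rangeSplitting f) (Subtype.ext hcell.symm)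
    exact (gluing (i, m₁)).exists_perm_eq_relabel (hq ▸ gluing (j, m')) hm₁ hb' hab
  · obtain ⟨rfl, rfl⟩ := eq_of_apply_eq_of_mem_Do hm₁ (sector_subset_Dtri m' hb) hab
    obtain rfl := eq_of_mem_sector ha hb hcell
    exact ⟨1, (relabel_one a).symm, fun x _ => by rw [relabel_one]⟩

end Framings

end Triangulation

/-! ### Charts -/

namespace Triangulation

section Representatives

variable (T : Triangulation S n)

/-- The index of a chosen triangle containing `x`. -/
def tri (x : S) : Fin n := (T.exists_apply_eq x).choose

/-- The position of `x` in its chosen triangle `T.tri x`. -/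
def coord (x : S) : E2 := (T.exists_apply_eq x).choose_spec.choose

theorem coord_mem_Dtri (x : S) : T.coord x ∈ Dtri :=
  (T.exists_apply_eq x).choose_spec.choose_spec.1

theorem apply_tri_coord (x : S) : T.σ (T.tri x) (T.coord x) = x :=
  (T.exists_apply_eq x).choose_spec.choose_spec.2

/-- A face of the chosen triangle of `x` that is glued to the cell `u` and whose sector contains
`x`; meaningful for `x` in the star of `u`. -/
def sectorAt (u : Set S) (x : S) : Option (Fin 3) :=
  Classical.epsilon fun m => T.cell (T.tri x) m = u ∧ T.coord x ∈ sector m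

/-- The corner of the chosen triangle of `x` closest to `x` in barycentric coordinates; meaningful
when one of the coordinates exceeds `1 / 2`. -/
def cornerAt (x : S) : Fin 3 := Classical.epsilon fun c => 1 / 2 < bary c (T.coord x)

variable {T}

theorem sectorAt_spec {u : Set S} {x : S} (hx : x ∈ T.star u) :
    T.cell (T.tri x) (T.sectorAt u x) = u ∧ T.coord x ∈ sector (T.sectorAt u x) :=
  Classical.epsilon_spec <| exists_mem_sector_of_apply_mem_star (T.coord_mem_Dtri x)
    ((T.apply_tri_coord x).symm ▸ hx)

theorem cornerAt_eq {x : S} {c : Fin 3} (hc : 1 / 2 < bary c (T.coord x)) : T.cornerAt x = c :=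
  eq_of_half_lt_bary (T.coord_mem_Dtri x)
    (Classical.epsilon_spec (p := fun c => 1 / 2 < bary c (T.coord x)) ⟨c, hc⟩) hc

end Representatives

namespace Framing

variable {T : Triangulation S n} {l : Set S → ℝ} (Φ : Framing T l)

section Charts

/-- The placement of the chosen triangle of `x` in the star of `u`. -/
def frameAt (u : Set S) (x : S) : E2 ≃ᵢ E2 := Φ.frame (T.tri x) (T.sectorAt u x)

/-- The map from the star of `u` to the plane that places each sector by the framing. -/
def chart (u : Set S) (x : S) : E2 := Φ.frameAt u x (T.layout l (T.tri x) (T.coord x))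

/-- The image under the placement of `chart u` of the corner nearest to `x`. -/
def cornerChart (u : Set S) (x : S) : E2 :=
  Φ.frameAt u x (T.layout l (T.tri x) (corner (T.cornerAt x)))

variable {i : Fin n} {m : Option (Fin 3)} {a : E2}

theorem exists_frame_eq_frameAt (ha : a ∈ sector m) :
    ∃ π : Equiv.Perm (Fin 3), T.coord (T.σ i a) = relabel π a ∧
      ∀ x, (∀ c, bary c a = 0 → bary c x = 0) → Φ.frame i m (T.layout l i x) =
        Φ.frameAt (T.cell i m) (T.σ i a) (T.layout l (T.tri (T.σ i a)) (relabel π x)) := by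
  have hstar : T.σ i a ∈ T.star (T.cell i m) := ⟨i, m, rfl, a, ha, rfl⟩
  obtain ⟨hcell, hcoord⟩ := sectorAt_spec hstar
  exact Φ.compat ha hcoord hcell.symm (T.apply_tri_coord _).symm

theorem chart_apply (ha : a ∈ sector m) :
    Φ.chart (T.cell i m) (T.σ i a) = Φ.frame i m (T.layout l i a) := by
  obtain ⟨π, hπ, hframe⟩ := Φ.exists_frame_eq_frameAt (i := i) ha
  rw [hframe a fun _ => id, ← hπ, chart]

theorem cornerChart_apply (ha : a ∈ sector m) {c : Fin 3} (hc : 1 / 2 < bary c a) :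
    Φ.cornerChart (T.cell i m) (T.σ i a) = Φ.frame i m (T.layout l i (corner c)) := by
  obtain ⟨π, hπ, hframe⟩ := Φ.exists_frame_eq_frameAt (i := i) ha
  have hcorner : T.cornerAt (T.σ i a) = π c := cornerAt_eq (by rwa [hπ, bary_relabel])
  rw [hframe (corner c), cornerChart, hcorner, relabel_corner]
  intro d hd
  have hdc : d ≠ c := by rintro rfl; linarith
  rw [bary_corner, if_neg hdc]

theorem frameAt_apply_of_mem_Do (ha : a ∈ Do) (ham : a ∈ sector m) :
    Φ.frameAt (T.cell i m) (T.σ i a) = Φ.frame i m := by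
  obtain ⟨htri, hcoord⟩ :=
    eq_of_apply_eq_of_mem_Do ha (T.coord_mem_Dtri _) (T.apply_tri_coord (T.σ i a)).symm
  obtain ⟨hcell, hsector⟩ := sectorAt_spec (x := T.σ i a) ⟨i, m, rfl, a, ham, rfl⟩
  rw [← htri] at hcell
  rw [← hcoord] at hsector
  rw [frameAt, ← htri, eq_of_mem_sector hsector ham hcell]

theorem eventually_frameAt_mul_inv_eq [T2Space S] {u v : Set S} {x : S} (hu : x ∈ T.star u)
    (hv : x ∈ T.star v) : ∀ᶠ y in 𝓝 x,
      Φ.frameAt u y * (Φ.frameAt v y)⁻¹ = Φ.frameAt u x * (Φ.frameAt v x)⁻¹ := by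
  obtain rfl | huv := eq_or_ne u v
  · simp
  obtain ⟨i, m, rfl, a, ham, rfl⟩ := hu
  obtain ⟨m', rfl, ham'⟩ := exists_mem_sector_of_apply_mem_star (sector_subset_Dtri m ham) hv
  have ha : a ∈ Do := mem_Do_of_mem_sector ham ham' huv
  refine T.eventually_nhds fun j b hb hab => ?_
  obtain ⟨rfl, rfl⟩ := eq_of_apply_eq_of_mem_Do ha hb hab.symm
  have Do_mem : Do ∈ 𝓝[Dtri] a := mem_nhdsWithin_of_mem_nhds (isOpen_interior.mem_nhds ha)
  filter_upwards [sector_mem_nhdsWithin ham, sector_mem_nhdsWithin ham', Do_mem] with b hbm hbm' hb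
  simp only [Φ.frameAt_apply_of_mem_Do, ha, ham, ham', hb, hbm, hbm']

end Charts

end Framing

section NearVertices

variable {T : Triangulation S n} {l : Set S → ℝ}

variable (T l) in
/-- The points of `S` that are `ε`-close to a vertex in every triangle containing them. -/
def nearVertices (ε : ℝ) : Set S :=
  {x | ∀ i, ∀ a ∈ Dtri, T.σ i a = x →
    ∃ c, 1 / 2 < bary c a ∧ dist (T.layout l i a) (T.layout l i (corner c)) < ε}

variable {ε : ℝ} {u : Set S} {x : S}

theorem Framing.eventually_cornerChart_eq [T2Space S] (Φ : Framing T l)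
    (hx : x ∈ T.nearVertices l ε) (hu : x ∈ T.star u) :
    ∀ᶠ y in 𝓝 x, Φ.cornerChart u y = Φ.cornerChart u x := by
  refine T.eventually_nhds fun i a ha hax => ?_
  obtain ⟨c, hc, -⟩ := hx i a ha hax
  subst hax
  obtain ⟨m, rfl, ham⟩ := exists_mem_sector_of_apply_mem_star ha hu
  filter_upwards [sector_mem_nhdsWithin ham, mem_nhdsWithin_of_mem_nhds
    ((continuous_bary c).continuousAt.eventually_const_lt hc)] with b hbm hb
  rw [Φ.cornerChart_apply hbm hb, Φ.cornerChart_apply ham hc]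

theorem isOpen_nearVertices [T2Space S] (l : Set S → ℝ) (ε : ℝ) :
    IsOpen (T.nearVertices l ε) := by
  refine isOpen_iff_mem_nhds.2 fun x hx => eventually_forall_apply_eq fun i a ha hax => ?_
  obtain ⟨c, hc, hdist⟩ := hx i a ha hax
  refine mem_nhdsWithin_of_mem_nhds ?_
  filter_upwards [(continuous_bary c).continuousAt.eventually_const_lt hc,
    ((T.continuous_layout l i).dist continuous_const).continuousAt.eventually_lt_const hdist]
    with b hb hb' using ⟨c, hb, hb'⟩

theorem vertexSet_subset_nearVertices (l : Set S → ℝ) (hε : 0 < ε) :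
    T.vertexSet ⊆ T.nearVertices l ε := by
  rintro x hx i a ha rfl
  obtain ⟨c, rfl⟩ := mem_V0.1 ((apply_mem_vertexSet_iff ha).1 hx)
  exact ⟨c, by norm_num [bary_corner], by simpa⟩

end NearVertices

end Triangulation

/-! ### The glued metric -/

namespace Triangulation

variable {T : Triangulation S n} {l : Set S → ℝ}

section GluedMetric

theorem dTri_nonneg (i : Fin n) (x y : S) : 0 ≤ dTri T l i x y :=
  Real.sInf_nonneg fun _ ⟨_, _, _, _, _, _, hr⟩ =>
    hr ▸ (dD_eq_dist_realization _ _ _).symm ▸ dist_nonneg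

theorem bddBelow_chainSums (x y : S) : BddBelow (chainSums T l x y) :=
  ⟨0, fun _ ⟨_, _, _, _, _, _, hr⟩ => hr ▸ Finset.sum_nonneg fun _ _ => dTri_nonneg _ _ _⟩

variable {a b : E2} {i : Fin n}

theorem dTri_mem_chainSums (ha : a ∈ Dtri) (hb : b ∈ Dtri) :
    dTri T l i (T.σ i a) (T.σ i b) ∈ chainSums T l (T.σ i a) (T.σ i b) := by
  refine ⟨1, fun j => if j = 0 then T.σ i a else T.σ i b, fun _ => i, by simp, by simp, ?_, by simp⟩
  intro j hj
  obtain rfl := Nat.lt_one_iff.1 hj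
  exact ⟨⟨a, ha, by simp⟩, ⟨b, hb, by simp⟩⟩

theorem dGlue_le (ha : a ∈ Dtri) (hb : b ∈ Dtri) :
    dGlue T l (T.σ i a) (T.σ i b) ≤ dist (T.layout l i a) (T.layout l i b) :=
  (csInf_le (bddBelow_chainSums _ _) (dTri_mem_chainSums ha hb)).trans <|
    csInf_le
      ⟨0, fun _ ⟨_, _, _, _, _, _, hr⟩ => hr ▸ (dD_eq_dist_realization _ _ _).symm ▸ dist_nonneg⟩
      ⟨a, ha, b, hb, rfl, rfl, (dD_eq_dist_realization _ _ _).symm⟩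

theorem sub_le_dTri {ψ : S → ℝ} {x y : S} (hx : x ∈ T.σ i '' Dtri) (hy : y ∈ T.σ i '' Dtri)
    (hψ : ∀ a ∈ Dtri, ∀ b ∈ Dtri,
      ψ (T.σ i b) - ψ (T.σ i a) ≤ dist (T.layout l i a) (T.layout l i b)) :
    ψ y - ψ x ≤ dTri T l i x y := by
  obtain ⟨a, ha, rfl⟩ := hx
  obtain ⟨b, hb, rfl⟩ := hy
  refine le_csInf ⟨_, a, ha, b, hb, rfl, rfl, rfl⟩ ?_
  rintro _ ⟨a', ha', b', hb', haa', hbb', rfl⟩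
  rw [← haa', ← hbb', dD_eq_dist_realization]
  exact hψ a' ha' b' hb'

theorem sub_le_dGlue {ψ : S → ℝ} {x y : S} (hxy : (chainSums T l x y).Nonempty)
    (hψ : ∀ i, ∀ a ∈ Dtri, ∀ b ∈ Dtri,
      ψ (T.σ i b) - ψ (T.σ i a) ≤ dist (T.layout l i a) (T.layout l i b)) :
    ψ y - ψ x ≤ dGlue T l x y := by
  refine le_csInf hxy ?_
  rintro _ ⟨k, c, idx, rfl, rfl, hc, rfl⟩
  rw [← Finset.sum_range_sub (fun j => ψ (c j))]
  exact Finset.sum_le_sum fun j hj =>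
    have := hc j (Finset.mem_range.1 hj)
    sub_le_dTri this.1 this.2 (hψ (idx j))

end GluedMetric

theorem _root_.TriIneqT.eventually_le_dist_layout (hl : TriIneqT T l) (x : S) :
    ∀ᶠ r in 𝓝[>] (0 : ℝ), ∀ i m, ∀ p ∈ openFace m, T.σ i p = x → ∀ b ∈ Dtri \ sector m,
      r ≤ dist (T.layout l i p) (T.layout l i b) := by
  refine eventually_all.2 fun i => eventually_all.2 fun m => ?_
  by_cases! hp : ∀ p ∈ openFace m, T.σ i p ≠ x
  · exact Eventually.of_forall fun r p hpm hpx => absurd hpx (hp p hpm)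
  obtain ⟨p, hpm, rfl⟩ := hp
  have notMem : T.layout l i p ∉ T.layout l i '' (Dtri \ sector m) := fun hp =>
    ((hl.layout_injective i).mem_set_image.1 hp).2 (openFace_subset_sector m hpm)
  have isClosed := ((isCompact_Dtri_diff_sector m).image (T.continuous_layout l i)).isClosed
  obtain ⟨R, hR, hball⟩ := Metric.isOpen_iff.1 isClosed.isOpen_compl _ notMem
  filter_upwards [Ioc_mem_nhdsGT hR] with r hr q hqm hqp b hb
  rw [injOn_openFace i m hqm hpm hqp]
  by_contra! hlt
  exact hball (Metric.mem_ball'.2 (hlt.trans_le hr.2)) (mem_image_of_mem _ hb)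

namespace Framing

variable (Φ : Framing T l)

section ChartMetric

variable {i : Fin n} {m : Option (Fin 3)} {x : S}

theorem dist_chart_apply {a b : E2} (ha : a ∈ sector m) (hb : b ∈ sector m) :
    dist (Φ.chart (T.cell i m) (T.σ i a)) (Φ.chart (T.cell i m) (T.σ i b)) =
      dist (T.layout l i a) (T.layout l i b) := by
  rw [Φ.chart_apply ha, Φ.chart_apply hb, (Φ.frame i m).dist_eq]

open Classical in
/-- The distance from `x` in the chart at `u`, truncated at `r` and extended by `r` to all of `S`;
for small `r` it is `1`-Lipschitz on every triangle. -/
def truncatedDist (u : Set S) (x : S) (r : ℝ) (y : S) : ℝ :=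
  if y ∈ T.star u then min (dist (Φ.chart u x) (Φ.chart u y)) r else r

theorem truncatedDist_le (u : Set S) (x : S) (r : ℝ) (y : S) : Φ.truncatedDist u x r y ≤ r := by
  unfold truncatedDist
  split_ifs
  exacts [min_le_right _ _, le_rfl]

theorem truncatedDist_apply {p a : E2} (hp : p ∈ sector m) (ha : a ∈ sector m) (r : ℝ) :
    Φ.truncatedDist (T.cell i m) (T.σ i p) r (T.σ i a) =
      min (dist (T.layout l i p) (T.layout l i a)) r := by
  rw [truncatedDist, if_pos ⟨i, m, rfl, a, ha, rfl⟩, Φ.dist_chart_apply hp ha]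

theorem truncatedDist_sub_le {u : Set S} {r : ℝ} (hx : x ∈ u)
    (hr : ∀ i m, ∀ p ∈ openFace m, T.σ i p = x → ∀ b ∈ Dtri \ sector m,
      r ≤ dist (T.layout l i p) (T.layout l i b)) (j : Fin n) {a b : E2} (ha : a ∈ Dtri)
    (hb : b ∈ Dtri) :
    Φ.truncatedDist u x r (T.σ j b) - Φ.truncatedDist u x r (T.σ j a) ≤
      dist (T.layout l j a) (T.layout l j b) := by
  have le_r := Φ.truncatedDist_le u x r (T.σ j b)
  have nonneg := dist_nonneg (x := T.layout l j a) (y := T.layout l j b)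
  by_cases hstar : T.σ j a ∈ T.star u
  · obtain ⟨m, rfl, ham⟩ := exists_mem_sector_of_apply_mem_star ha hstar
    obtain ⟨p, hp, rfl⟩ := hx
    have hpm := openFace_subset_sector m hp
    have triangle := dist_triangle (T.layout l j p) (T.layout l j a) (T.layout l j b)
    have le_dist : Φ.truncatedDist (T.cell j m) (T.σ j p) r (T.σ j b) ≤
        dist (T.layout l j p) (T.layout l j b) := by
      by_cases hbm : b ∈ sector m
      · exact (Φ.truncatedDist_apply hpm hbm r).trans_le (min_le_left _ _)
      · exact le_r.trans (hr j m p hp rfl b ⟨hb, hbm⟩)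
    rw [Φ.truncatedDist_apply hpm ham, sub_le_comm, le_min_iff]
    constructor <;> linarith
  · have : Φ.truncatedDist u x r (T.σ j a) = r := if_neg hstar
    linarith

theorem eventually_dist_chart_le_dGlue [T2Space S] (hl : TriIneqT T l) (hx : x ∈ T.cell i m) :
    ∀ᶠ y in 𝓝 x,
      dist (Φ.chart (T.cell i m) x) (Φ.chart (T.cell i m) y) ≤ dGlue T l x y := by
  obtain ⟨r, hr, hr0⟩ := ((hl.eventually_le_dist_layout x).and self_mem_nhdsWithin).exists
  refine T.eventually_nhds fun j a ha hax => ?_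
  subst hax
  obtain ⟨m', hcell, ham⟩ := exists_mem_openFace_of_apply_mem_cell ha hx
  rw [← hcell] at hx ⊢
  have hsector := openFace_subset_sector m' ham
  have near : ∀ᶠ b in 𝓝[Dtri] a, dist (T.layout l j a) (T.layout l j b) < r :=
    mem_nhdsWithin_of_mem_nhds <| (continuous_const.dist
      (T.continuous_layout l j)).continuousAt.eventually_lt_const (by simpa using hr0)
  filter_upwards [sector_mem_nhdsWithin hsector, near] with b hbm hb
  have := sub_le_dGlue ⟨_, dTri_mem_chainSums (i := j) ha (sector_subset_Dtri m' hbm)⟩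
    fun j' a' ha' b' hb' => Φ.truncatedDist_sub_le hx hr j' ha' hb'
  rw [Φ.truncatedDist_apply hsector hbm, Φ.truncatedDist_apply hsector hsector, dist_self,
    min_eq_left hb.le, min_eq_left (le_of_lt hr0), sub_zero] at this
  rwa [Φ.dist_chart_apply hsector hbm]

end ChartMetric

end Framing

end Triangulation

/-! ### Developments -/

namespace Triangulation

/-- The developed image of `H y` in the plane, its chosen triangle being placed by `A y`. -/
def develop (T : Triangulation S n) (l : Set S → ℝ) {Y : Type*} (H : Y → S) (A : Y → E2 ≃ᵢ E2)
    (y : Y) : E2 :=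
  A y (T.layout l (T.tri (H y)) (T.coord (H y)))

/-- The developed image of the corner of the chosen triangle of `H y` that is nearest to `H y`. -/
def developCorner (T : Triangulation S n) (l : Set S → ℝ) {Y : Type*} (H : Y → S)
    (A : Y → E2 ≃ᵢ E2) (y : Y) : E2 :=
  A y (T.layout l (T.tri (H y)) (corner (T.cornerAt (H y))))

namespace Framing

variable {T : Triangulation S n} {l : Set S → ℝ} (Φ : Framing T l)

section Developments

variable {Y Z : Type*} [TopologicalSpace Y] [TopologicalSpace Z]

/-- The isometry that carries the star of `u`, as drawn by `chart u`, to its position in the plane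
when the chosen triangle of `H y` is placed by `A y`. -/
def placement (H : Y → S) (A : Y → E2 ≃ᵢ E2) (u : Set S) (y : Y) : E2 ≃ᵢ E2 :=
  A y * (Φ.frameAt u (H y))⁻¹

/-- Placements `A y` of the chosen triangles of the points `H y` in the plane that develop `H`:
the triangles around a cell are unfolded about that cell. -/
def IsDevelopment (H : Y → S) (A : Y → E2 ≃ᵢ E2) : Prop :=
  ∀ u y, H y ∈ T.star u → ∀ᶠ y' in 𝓝 y, Φ.placement H A u y' = Φ.placement H A u y

variable {H : Y → S} {A : Y → E2 ≃ᵢ E2}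

theorem exists_isDevelopment [T2Space S] [SimplyConnectedSpace Y] [LocallyPathConnectedSpace Y]
    (hH : Continuous H) (hV : ∀ y, H y ∉ T.vertexSet) : ∃ A, Φ.IsDevelopment H A := by
  have cover (y : Y) : ∃ u, H y ∈ T.star u := by
    obtain ⟨i, m, hx⟩ := T.exists_mem_cell (hV y)
    exact ⟨_, mem_star_of_mem_cell hx⟩
  exact exists_developing (fun u => (isOpen_star u).preimage hH) cover
    (fun u y => Φ.frameAt u (H y)) fun u v y hy =>
      hH.continuousAt.eventually (Φ.eventually_frameAt_mul_inv_eq hy.1 hy.2)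

omit [TopologicalSpace Y] in
theorem develop_eq_placement_chart (u : Set S) (y : Y) :
    T.develop l H A y = Φ.placement H A u y (Φ.chart u (H y)) := by
  simp [develop, placement, chart, IsometryEquiv.mul_apply]

omit [TopologicalSpace Y] in
theorem developCorner_eq_placement_cornerChart (u : Set S) (y : Y) :
    T.developCorner l H A y = Φ.placement H A u y (Φ.cornerChart u (H y)) := by
  simp [developCorner, placement, cornerChart, IsometryEquiv.mul_apply]

variable {Φ}

namespace IsDevelopment

theorem comp (hA : Φ.IsDevelopment H A) {g : Z → Y} (hg : Continuous g) :
    Φ.IsDevelopment (H ∘ g) (A ∘ g) :=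
  fun u z hz => hg.continuousAt.eventually (hA u (g z) hz)

theorem dist_develop_of_mem_sector [PreconnectedSpace Y] (hA : Φ.IsDevelopment H A) {i : Fin n}
    {m : Option (Fin 3)} {q : Y → E2} (hq : ∀ y, q y ∈ sector m) (hH : ∀ y, H y = T.σ i (q y))
    (y y' : Y) :
    dist (T.develop l H A y) (T.develop l H A y') =
      dist (T.layout l i (q y)) (T.layout l i (q y')) := by
  have placement_eq : Φ.placement H A (T.cell i m) y' = Φ.placement H A (T.cell i m) y :=
    ((IsLocallyConstant.iff_eventually_eq _).2 fun y =>
      hA _ y ⟨i, m, rfl, q y, hq y, (hH y).symm⟩).apply_eq_of_preconnectedSpace y' y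
  rw [Φ.develop_eq_placement_chart (T.cell i m), Φ.develop_eq_placement_chart (T.cell i m),
    placement_eq, IsometryEquiv.dist_eq, hH, hH, Φ.dist_chart_apply (hq y) (hq y')]

theorem eventually_dist_develop_le [T2Space S] (hA : Φ.IsDevelopment H A) (hl : TriIneqT T l)
    (hH : Continuous H) {y : Y} (hV : H y ∉ T.vertexSet) :
    ∀ᶠ y' in 𝓝 y, dist (T.develop l H A y) (T.develop l H A y') ≤ dGlue T l (H y) (H y') := by
  obtain ⟨i, m, hx⟩ := T.exists_mem_cell hV
  filter_upwards [hA _ y (mem_star_of_mem_cell hx),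
    hH.continuousAt.eventually (Φ.eventually_dist_chart_le_dGlue hl hx)] with y' placement_eq hy'
  rwa [Φ.develop_eq_placement_chart (T.cell i m), Φ.develop_eq_placement_chart (T.cell i m),
    placement_eq, IsometryEquiv.dist_eq]

theorem dist_develop_le_of_nearVertices [T2Space S] [PreconnectedSpace Y]
    (hA : Φ.IsDevelopment H A) (hH : Continuous H) (hV : ∀ y, H y ∉ T.vertexSet) {ε : ℝ}
    (hε : ∀ y, H y ∈ T.nearVertices l ε) (y y' : Y) :
    dist (T.develop l H A y) (T.develop l H A y') ≤ 2 * ε := by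
  have dist_corner_le (y : Y) : dist (T.develop l H A y) (T.developCorner l H A y) ≤ ε := by
    obtain ⟨c, hc, hdist⟩ := hε y _ _ (T.coord_mem_Dtri _) (T.apply_tri_coord _)
    rw [develop, developCorner, IsometryEquiv.dist_eq, cornerAt_eq hc]
    exact hdist.le
  have locConst : IsLocallyConstant (T.developCorner l H A) := by
    refine (IsLocallyConstant.iff_eventually_eq _).2 fun y => ?_
    obtain ⟨i, m, hx⟩ := T.exists_mem_cell (hV y)
    have hstar := mem_star_of_mem_cell hx
    filter_upwards [hA _ y hstar, hH.continuousAt.eventually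
      (Φ.eventually_cornerChart_eq (hε y) hstar)] with y' placement_eq corner_eq
    rw [Φ.developCorner_eq_placement_cornerChart (T.cell i m),
      Φ.developCorner_eq_placement_cornerChart (T.cell i m), placement_eq, corner_eq]
  calc dist (T.develop l H A y) (T.develop l H A y')
      ≤ dist (T.develop l H A y) (T.developCorner l H A y) +
        dist (T.develop l H A y') (T.developCorner l H A y) := dist_triangle_right _ _ _
    _ ≤ ε + ε := add_le_add (dist_corner_le y)
        (locConst.apply_eq_of_preconnectedSpace y' y ▸ dist_corner_le y')
    _ = 2 * ε := (two_mul ε).symm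

end IsDevelopment

end Developments

end Framing

end Triangulation

/-! ### Comparison of edge lengths -/

namespace Triangulation

variable {T : Triangulation S n} {l l' : Set S → ℝ}

section Homotopies

variable [T2Space S] {i : Fin n} {ε : ℝ}

theorem dist_layout_le_of_homotopy (hl : TriIneqT T l) {H : I × I → S} (hH : Continuous H)
    (hV : ∀ p, H p ∉ T.vertexSet) {C : ℝ}
    (lipschitz : ∀ s s', dGlue T l (H (0, s)) (H (0, s')) ≤ C * dist s s') {m : Option (Fin 3)}
    {q : I → E2} (hq : ∀ s, q s ∈ sector m) (H_one : ∀ s, H (1, s) = T.σ i (q s))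
    (left : ∀ t, H (t, 0) ∈ T.nearVertices l ε) (right : ∀ t, H (t, 1) ∈ T.nearVertices l ε) :
    dist (T.layout l i (q 0)) (T.layout l i (q 1)) ≤ C + 4 * ε := by
  have : ContractibleSpace I := (convex_Icc 0 1).contractibleSpace (nonempty_Icc.2 zero_le_one)
  have : LocallyPathConnectedSpace I := (convex_Icc (0 : ℝ) 1).locallyPathConnectedSpace
  obtain ⟨Φ⟩ := exists_framing hl
  obtain ⟨A, hA⟩ := Φ.exists_isDevelopment hH hV
  let D := T.develop l H A
  have top : dist (D (1, 0)) (D (1, 1)) = dist (T.layout l i (q 0)) (T.layout l i (q 1)) :=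
    (hA.comp (Continuous.prodMk_right 1)).dist_develop_of_mem_sector hq H_one 0 1
  have vertical (s : I) (hs : ∀ t, H (t, s) ∈ T.nearVertices l ε) :
      dist (D (0, s)) (D (1, s)) ≤ 2 * ε :=
    have hg : Continuous fun t : I => (t, s) := Continuous.prodMk_left s
    (hA.comp hg).dist_develop_le_of_nearVertices (hH.comp hg) (fun _ => hV _) hs 0 1
  have bottom : dist (D (0, 0)) (D (0, 1)) ≤ C := by
    let g (s : ℝ) : I × I := (0, projIcc 0 1 zero_le_one s)
    have hg : Continuous g := continuous_const.prodMk continuous_projIcc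
    have := dist_le_mul_sub_of_forall_eventually (f := D ∘ g) (C := C) zero_le_one fun s hs => by
      filter_upwards [self_mem_nhdsWithin, mem_nhdsWithin_of_mem_nhds
        ((hA.comp hg).eventually_dist_develop_le hl (hH.comp hg) (hV (g s)))] with t ht hst
      refine hst.trans ((lipschitz _ _).trans_eq ?_)
      rw [projIcc_of_mem _ hs, projIcc_of_mem _ ht, Subtype.dist_eq]
    simpa [g] using this
  calc dist (T.layout l i (q 0)) (T.layout l i (q 1))
      = dist (D (1, 0)) (D (1, 1)) := top.symm
    _ ≤ dist (D (1, 0)) (D (0, 0)) + dist (D (0, 0)) (D (0, 1)) + dist (D (0, 1)) (D (1, 1)) :=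
      dist_triangle4 _ _ _ _
    _ ≤ C + 4 * ε := by
      linarith [vertical 0 left, vertical 1 right, dist_comm (D (1, 0)) (D (0, 0))]

variable {F : I × ↥T.vertexSetᶜ → ↥T.vertexSetᶜ}

theorem dist_layout_le_add (hl : TriIneqT T l) (hF : Continuous F) (hF1 : ∀ x, F (1, x) = x)
    (hle : ∀ x y, dGlue T l (F (0, x)) (F (0, y)) ≤ dGlue T l' x y) {k : Fin 3}
    {x y : ↥T.vertexSetᶜ} {a b : E2} (ha : a ∈ openFace (some k)) (hb : b ∈ openFace (some k))
    (hax : T.σ i a = x) (hby : T.σ i b = y) (hx : ∀ t, ↑(F (t, x)) ∈ T.nearVertices l ε)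
    (hy : ∀ t, ↑(F (t, y)) ∈ T.nearVertices l ε) :
    dist (T.layout l i a) (T.layout l i b) ≤
      dist (T.layout l' i a) (T.layout l' i b) + 4 * ε := by
  let q (s : I) : E2 := AffineMap.lineMap a b (s : ℝ)
  have q_mem (s : I) : q s ∈ openFace (some k) :=
    (convex_openFace _).lineMap_mem ha hb s.2
  have hqV (s : I) : T.σ i (q s) ∈ T.vertexSetᶜ :=
    (disjoint_vertexSet_cell i (some k)).notMem_of_mem_right (mem_image_of_mem _ (q_mem s))
  let γ (s : I) : ↥T.vertexSetᶜ := ⟨T.σ i (q s), hqV s⟩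
  have hγ : Continuous γ :=
    ((T.continuousOn i).comp_continuous
      (AffineMap.lineMap_continuous.comp continuous_subtype_val)
      fun s => openFace_subset_Dtri _ (q_mem s)).subtype_mk hqV
  have γ_zero : γ 0 = x := Subtype.ext (by simp [γ, q, hax])
  have γ_one : γ 1 = y := Subtype.ext (by simp [γ, q, hby])
  have lipschitz (s s' : I) : dGlue T l (F (0, γ s)) (F (0, γ s')) ≤
      dist (T.layout l' i a) (T.layout l' i b) * dist s s' := by
    refine (hle _ _).trans ((dGlue_le (openFace_subset_Dtri _ (q_mem s))
      (openFace_subset_Dtri _ (q_mem s'))).trans_eq ?_)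
    have map_q (s : I) : T.layout l' i (q s) =
        AffineMap.lineMap (T.layout l' i a) (T.layout l' i b) (s : ℝ) :=
      (T.layout l' i).toAffineMap.apply_lineMap a b s
    rw [map_q, map_q, dist_lineMap_lineMap, mul_comm, Subtype.dist_eq]
  have := dist_layout_le_of_homotopy hl (H := fun p => F (p.1, γ p.2)) (by fun_prop)
    (fun p => (F (p.1, γ p.2)).2) lipschitz (fun s => openFace_subset_sector _ (q_mem s))
    (fun s => by rw [hF1]) (by simpa only [γ_zero]) (by simpa only [γ_one])
  simpa [q] using this

theorem isCompact_compl_nearVertices (l : Set S → ℝ) (hε : 0 < ε) :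
    IsCompact ((↑) ⁻¹' (T.nearVertices l ε)ᶜ : Set ↥T.vertexSetᶜ) := by
  have := T.compactSpace
  rw [Topology.IsInducing.subtypeVal.isCompact_iff, Subtype.image_preimage_coe,
    inter_eq_right.2 (compl_subset_compl.2 (vertexSet_subset_nearVertices l hε))]
  exact (isOpen_nearVertices l ε).isClosed_compl.isCompact

theorem eventually_forall_mem_nearVertices (hF : IsProperMap F) (l : Set S → ℝ) (hε : 0 < ε)
    {c : Fin 3} {U : Set E2} (hU : U ⊆ Dtri) :
    ∀ᶠ a in 𝓝[U] (corner c), ∀ x : ↥T.vertexSetᶜ, T.σ i a = x →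
      ∀ t, ↑(F (t, x)) ∈ T.nearVertices l ε := by
  let K : Set ↥T.vertexSetᶜ := Prod.snd '' (F ⁻¹' ((↑) ⁻¹' (T.nearVertices l ε)ᶜ))
  have compact_K : IsCompact ((↑) '' K : Set S) :=
    ((hF.isCompact_preimage (isCompact_compl_nearVertices l hε)).image continuous_snd).image
      continuous_subtype_val
  have notMem_K : T.σ i (corner c) ∉ ((↑) '' K : Set S) := by
    rintro ⟨x, -, hx⟩
    exact x.2 (hx ▸ mem_iUnion.2 ⟨i, mem_image_of_mem _ (mem_V0.2 ⟨c, rfl⟩)⟩)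
  have tendsto : Tendsto (T.σ i) (𝓝[U] (corner c)) (𝓝 (T.σ i (corner c))) :=
    (T.continuousOn i _ (corner_mem_Dtri c)).mono hU
  filter_upwards [tendsto (compact_K.isClosed.isOpen_compl.mem_nhds notMem_K)] with a ha x hx t
  by_contra hnear
  exact ha ⟨x, ⟨(t, x), hnear, rfl⟩, hx.symm⟩

theorem length_side_le_of_isProperMap (hl : TriIneqT T l) (hl' : TriIneqT T l')
    (hF : IsProperMap F) (hF1 : ∀ x, F (1, x) = x)
    (hle : ∀ x y, dGlue T l (F (0, x)) (F (0, y)) ≤ dGlue T l' x y) (i : Fin n) (k : Fin 3) :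
    l (T.σ i '' side k) ≤ l' (T.σ i '' side k) := by
  obtain ⟨c, d, hck, hdk, hcd⟩ := exists_ne_ne k
  rw [← hl.dist_layout_corner i hck hdk hcd, ← hl'.dist_layout_corner i hck hdk hcd]
  refine le_of_forall_pos_le_add fun ε hε => ?_
  let edgeEnd (c : Fin 3) := 𝓝[openFace (some k)] (corner c)
  have neBot {c : Fin 3} (hc : c ≠ k) : (edgeEnd c).NeBot :=
    mem_closure_iff_nhdsWithin_neBot.1 <| mem_closure_openFace (corner_mem_Dtri c) fun j hj => by
      rw [bary_corner, if_neg]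
      rintro rfl
      exact hc (Option.some_inj.1 hj).symm
  have := neBot hck
  have := neBot hdk
  have near (c : Fin 3) : ∀ᶠ a in edgeEnd c, a ∈ openFace (some k) ∧
      ∀ x : ↥T.vertexSetᶜ, T.σ i a = x → ∀ t, ↑(F (t, x)) ∈ T.nearVertices l (ε / 4) :=
    eventually_mem_nhdsWithin.and <|
      eventually_forall_mem_nearVertices hF l (by positivity) (openFace_subset_Dtri _)
  have tendsto (l : Set S → ℝ) : Tendsto (fun p : E2 × E2 => dist (T.layout l i p.1)
      (T.layout l i p.2)) (edgeEnd c ×ˢ edgeEnd d)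
      (𝓝 (dist (T.layout l i (corner c)) (T.layout l i (corner d)))) :=
    (((T.continuous_layout l i).tendsto _).mono_left nhdsWithin_le_nhds |>.comp tendsto_fst).dist
      (((T.continuous_layout l i).tendsto _).mono_left nhdsWithin_le_nhds |>.comp tendsto_snd)
  refine le_of_tendsto_of_tendsto (tendsto l) ((tendsto l').add_const ε) ?_
  filter_upwards [(near c).prod_mk (near d)] with ⟨a, b⟩ ⟨⟨ha, ha'⟩, hb, hb'⟩
  have notMem {a : E2} (ha : a ∈ openFace (some k)) : T.σ i a ∉ T.vertexSet :=
    (disjoint_vertexSet_cell i (some k)).notMem_of_mem_right (mem_image_of_mem _ ha)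
  have := dist_layout_le_add hl hF.continuous hF1 hle ha hb rfl rfl (ha' ⟨_, notMem ha⟩ rfl)
    (hb' ⟨_, notMem hb⟩ rfl)
  linarith

end Homotopies

section Isotopies

variable [T2Space S] {F : I → ↥T.vertexSetᶜ ≃ₜ ↥T.vertexSetᶜ}

theorem length_side_le_of_isotopy (hl : TriIneqT T l) (hl' : TriIneqT T l')
    (hF : Continuous fun p : I × ↥T.vertexSetᶜ => F p.1 p.2) (hF1 : F 1 = Homeomorph.refl _)
    (hle : ∀ x y, dGlue T l (F 0 x) (F 0 y) ≤ dGlue T l' x y) (i : Fin n) (k : Fin 3) :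
    l (T.σ i '' side k) ≤ l' (T.σ i '' side k) := by
  have := T.compactSpace
  have := T.locallyConnectedSpace
  have isOpen : IsOpen T.vertexSetᶜ := T.isClosed_vertexSet.isOpen_compl
  have := isOpen.locallyCompactSpace
  have := isOpen.locallyConnectedSpace
  exact length_side_le_of_isProperMap hl hl' (isProperMap_uncurry_homeomorph hF)
    (fun x => by simp [hF1]) hle i k

theorem length_side_eq_of_isotopy (hl : TriIneqT T l) (hl' : TriIneqT T l')
    (hF : Continuous fun p : I × ↥T.vertexSetᶜ => F p.1 p.2) (hF1 : F 1 = Homeomorph.refl _)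
    (hpull : ∀ x y : ↥T.vertexSetᶜ, dGlue T l' x y = dGlue T l (F 0 x) (F 0 y)) (i : Fin n)
    (k : Fin 3) : l (T.σ i '' side k) = l' (T.σ i '' side k) := by
  let G (t : I) : ↥T.vertexSetᶜ ≃ₜ ↥T.vertexSetᶜ := (F 0).symm.trans (F (σ t))
  have hG : Continuous fun p : I × ↥T.vertexSetᶜ => G p.1 p.2 :=
    hF.comp (f := fun p : I × ↥T.vertexSetᶜ => (σ p.1, (F 0).symm p.2)) (by fun_prop)
  refine (length_side_le_of_isotopy hl hl' hF hF1 (fun x y => (hpull x y).ge) i k).antisymm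
    (length_side_le_of_isotopy hl' hl hG (by simp [G]) (fun x y => ?_) i k)
  simp [G, hF1, hpull]

end Isotopies

end Triangulation

theorem exists_homeomorph_of_bijOn {X : Type*} [TopologicalSpace X] {s : Set X} {f g : X → X}
    (hf : ContinuousOn f s) (hbij : BijOn f s s) (hg : ContinuousOn g s)
    (hgf : ∀ x ∈ s, g (f x) = x) : ∃ e : s ≃ₜ s, ∀ x : s, (e x : X) = f x := by
  have apply_symm (y : s) : (hbij.equiv.symm y : X) = g y := by
    obtain ⟨x, rfl⟩ := hbij.equiv.surjective y
    rw [Equiv.symm_apply_apply]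
    exact (hgf x x.2).symm
  refine ⟨⟨hbij.equiv, ?_, ?_⟩, fun _ => rfl⟩
  · exact (continuousOn_iff_continuous_domRestrict.1 hf).subtype_mk _
  · refine continuous_induced_rng.2 ?_
    exact (continuousOn_iff_continuous_domRestrict.1 hg).congr fun y => (apply_symm y).symm

theorem edge_lengths_injective_general {S : Type} [TopologicalSpace S] [T2Space S] {n : ℕ}
    (T : Triangulation S n) (l l' : Set S → ℝ) (hl : TriIneqT T l) (hl' : TriIneqT T l')
    (F : ℝ → S → S)
    (hFcont : ContinuousOn (fun p : ℝ × S => F p.1 p.2) (Icc (0 : ℝ) 1 ×ˢ T.vertexSetᶜ))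
    (hFbij : ∀ t ∈ Icc (0 : ℝ) 1, BijOn (F t) T.vertexSetᶜ T.vertexSetᶜ)
    (hFinv : ∀ t ∈ Icc (0 : ℝ) 1, ∃ G : S → S, ContinuousOn G T.vertexSetᶜ ∧
      ∀ x ∈ T.vertexSetᶜ, G (F t x) = x)
    (hF1 : ∀ x ∈ T.vertexSetᶜ, F 1 x = x)
    (hpull : ∀ x ∈ T.vertexSetᶜ, ∀ y ∈ T.vertexSetᶜ,
      dGlue T l' x y = dGlue T l (F 0 x) (F 0 y)) :
    ∀ i : Fin n, ∀ e ∈ E0, l (T.σ i '' e) = l' (T.σ i '' e) := by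
  have exists_homeomorph (t : I) :
      ∃ e : ↥T.vertexSetᶜ ≃ₜ ↥T.vertexSetᶜ, ∀ x : ↥T.vertexSetᶜ, (e x : S) = F t x := by
    obtain ⟨G, hG, hGF⟩ := hFinv t t.2
    exact exists_homeomorph_of_bijOn (hFcont.comp (f := fun x => ((t : ℝ), x)) (by fun_prop)
      fun x hx => ⟨t.2, hx⟩) (hFbij t t.2) hG hGF
  choose Φ hΦ using exists_homeomorph
  have continuous_Φ : Continuous fun p : I × ↥T.vertexSetᶜ => Φ p.1 p.2 := by
    refine continuous_induced_rng.2 ?_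
    simp only [Function.comp_def, hΦ]
    exact hFcont.comp_continuous (f := fun p : I × ↥T.vertexSetᶜ => ((p.1 : ℝ), (p.2 : S)))
      (by fun_prop) fun p => ⟨p.1.2, p.2.2⟩
  rintro i e he
  obtain ⟨k, rfl⟩ := E0_eq_range_side ▸ he
  refine Triangulation.length_side_eq_of_isotopy hl hl' continuous_Φ ?_ (fun x y => ?_) i k
  · ext x
    simp [hΦ, hF1 x x.2]
  · simp [hΦ, hpull x x.2 y y.2]

/-- Proposition 5.4: if `l, l' ∈ ℝ^{E(T)}_Δ` and there is a homeomorphism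
`f : S → S` fixing the vertex set `V = ⋃ᵢ σᵢ(V₀)` setwise, whose restriction to `S ∖ V` is
isotopic to the identity of `S ∖ V`, and which pulls `d_T[l]` back to `d_T[l']`, then
`l = l'` on the edges of `T`; i.e. `l ↦ [d_T[l]]` is injective into the Teichmüller space
of polyhedral metrics on `(S, V)`. -/
theorem edge_lengths_injective
    {S : Type} [TopologicalSpace S] [CompactSpace S] [T2Space S] [ConnectedSpace S]
    {n : ℕ} (T : Triangulation S n) (l l' : Set S → ℝ)
    (hl : TriIneqT T l) (hl' : TriIneqT T l')
    (V : Set S) (hV : V = ⋃ i, T.σ i '' V0)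
    (f : S ≃ₜ S) (hfV : f '' V = V)
    (F : ℝ → S → S)
    (hFcont : ContinuousOn (fun p : ℝ × S => F p.1 p.2) (Icc (0:ℝ) 1 ×ˢ Vᶜ))
    (hFbij : ∀ t ∈ Icc (0:ℝ) 1, Set.BijOn (F t) Vᶜ Vᶜ)
    (hFinv : ∀ t ∈ Icc (0:ℝ) 1, ∃ G : S → S, ContinuousOn G Vᶜ ∧
      (∀ x ∈ Vᶜ, G (F t x) = x) ∧ (∀ x ∈ Vᶜ, F t (G x) = x))
    (hF0 : ∀ x ∈ Vᶜ, F 0 x = f x) (hF1 : ∀ x ∈ Vᶜ, F 1 x = x)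
    (hpull : ∀ x y : S, dGlue T l' x y = dGlue T l (f x) (f y)) :
    ∀ i : Fin n, ∀ e ∈ E0, l (T.σ i '' e) = l' (T.σ i '' e) := by
  subst hV
  refine edge_lengths_injective_general T l l' hl hl' F hFcont hFbij
    (fun t ht => (hFinv t ht).imp fun _ hG => ⟨hG.1, hG.2.1⟩) hF1 fun x hx y hy => ?_
  rw [hF0 x hx, hF0 y hy, hpull]
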